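/- Let m ≥ n, let 2 ≤ d ≤ n be an integer, let k := ⌊m(n−d+1)/ℓ⌋ (the maximal rank allowed by the Singleton bound ℓk ≤ max{m,n}(min{m,n}−d+1) for rank-metric codes over finite chain rings) and θ := (d−1)(n−d+1). Then, with limits taken over prime powers q → ∞: if ℓ > θ then lim_{q→∞} δ_q^{rk}(N,k,ℓ,d) = 1; if ℓ < θ then lim_{q→∞} δ_q^{rk}(N,k,ℓ,d) = 0; and if ℓ = θ then limsup_{q→∞} δ_q^{rk}(N,k,ℓ,d) ≤ 1/2. -/

import Mathlib

/-!
For a fixed prime power `q`, the count of codes over the chain rings reduces to a count over their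
residue fields `K = 𝔽_q`, `F = 𝔽_{q^ℓ}` and `E = 𝔽_{q^m}`. A free code of rank `k` is given by an
ordered basis, and a tuple is independent over the chain ring if and only if its reduction is
independent over `F` (`li_reduce`). Every nonzero codeword is a power of the uniformizer times one
with nonzero reduction, and multiplying it further, into the socle, can only lower its rank. On the
socle, a copy of the residue field, the rank is the `K`-rank of the reduction (`rank_socle`). So a
free code has distance at least `d` if and only if no nontrivial `F`-combination of the reduced
basis lies in the ball `B` of radius `d - 1` in `E ^ n` (`le_minDist_span_iff`, `card_codes_mul`).
Both the number of codes and the normalising count scale by the same powers of `q`, and the density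
becomes the proportion of such good tuples, up to a factor tending to `1` (`density_reduction`).

Let `X` count the nonzero coefficient vectors whose combination of a uniform `k`-tuple lies in `B`,
and let `Q = q ^ ℓ = |F|`. The ball is stable under nonzero scalars, so `X ≥ Q - 1` on every bad
tuple, and Markov's inequality gives `P(good) ≥ 1 - 𝔼X / (Q - 1)`. Combinations with
non-proportional coefficients are independent, so `𝔼X² ≤ Q 𝔼X + (𝔼X)²`, and the Cauchy-Schwarz
inequality gives `P(good) ≤ 1 / (1 + 𝔼X / Q)` (`moment_bounds`).

With `r = d - 1` and `p = n - d + 1`, choosing which entries span a tuple of rank at most `r` shows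
that `B` has between `(1 - o(1)) q ^ (m r + r p)` and `binom(n, r) q ^ (m r + r p)` elements. There
are `q ^ (m p)` combinations in a space of size `q ^ (m n)`, so `𝔼X` has order `q ^ (r p)`, that is
`q ^ θ`. Hence `𝔼X / Q` has order `q ^ (θ - ℓ)`: it tends to `0` for `θ < ℓ`, to infinity for
`ℓ < θ`, and for `ℓ = θ` its lower bound tends to `1`, which bounds the density by `1 / 2` in the
limit (`trichotomy`).
-/

open Filter Topology

noncomputable def NN (s q : ℕ) (n k : ℤ) : ℝ :=
  if k < 0 then 0 else
    (q : ℝ) ^ (k * (n - k) * ((s : ℤ) - 1)) *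
      ∏ i ∈ Finset.Icc 1 k.toNat, ((q : ℝ) ^ (n - (i : ℤ) + 1) - 1) / ((q : ℝ) ^ (i : ℤ) - 1)

noncomputable def mu (A : Type*) [Semiring A] {M : Type*} [AddCommMonoid M] [Module A M]
    (C : Submodule A M) : ℕ :=
  sInf {k : ℕ | ∃ f : Fin k → M, Submodule.span A (Set.range f) = C}

noncomputable def minDist {M : Type*} (D : M → M → ℝ) (C : Set M) : ℝ :=
  sInf {r : ℝ | ∃ x ∈ C, ∃ y ∈ C, x ≠ y ∧ D x y = r}

def IsChainData (s q : ℕ) (R : Type*) [CommRing R] (γ : R) : Prop :=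
  (Ideal.span {γ}).IsMaximal ∧ (∀ x : R, ¬IsUnit x → x ∈ Ideal.span {γ}) ∧
    γ ^ s = 0 ∧ γ ^ (s - 1) ≠ 0 ∧ Nat.card (R ⧸ Ideal.span {γ}) = q

def IsGaloisExtData (m card : ℕ) (R : Type*) [CommRing R] (S : Type*) [CommRing S]
    [Algebra R S] (γ : R) : Prop :=
  Module.Free R S ∧ Module.finrank R S = m ∧
    (Ideal.span {algebraMap R S γ}).IsMaximal ∧
    (∀ x : S, ¬IsUnit x → x ∈ Ideal.span {algebraMap R S γ}) ∧
    Nat.card (S ⧸ Ideal.span {algebraMap R S γ}) = card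

def IsGoodDist {S : Type*} [CommRing S] {n : ℕ} (D : (Fin n → S) → (Fin n → S) → ℝ) : Prop :=
  (∀ x y, 0 ≤ D x y) ∧ (∀ x y, (D x y = 0 ↔ x = y)) ∧ (∀ x y, D x y = D y x) ∧
    (∀ x y z, D x z ≤ D x y + D y z) ∧ (∀ x y z, D (x + z) (y + z) = D x y) ∧
    (∀ (a : S) (x : Fin n → S), D (a • x) 0 ≤ D x 0)

noncomputable def volBall (R : Type*) [CommRing R] {S : Type*} [CommRing S] [Algebra R S]
    (γ : R) {n : ℕ} (D : (Fin n → S) → (Fin n → S) → ℝ) (d : ℕ) : ℕ :=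
  Nat.card {x : Fin n → S // (∃ i, x i ∉ Ideal.span {algebraMap R S γ}) ∧ D x 0 < (d : ℝ)}

noncomputable def volBallFull {S : Type*} [CommRing S] {n : ℕ} (D : (Fin n → S) → (Fin n → S) → ℝ)
    (d : ℕ) : ℕ :=
  Nat.card {x : Fin n → S // D x 0 < (d : ℝ)}

noncomputable def volBallGamma (R : Type*) [CommRing R] {S : Type*} [CommRing S] [Algebra R S]
    (γ : R) {n : ℕ} (D : (Fin n → S) → (Fin n → S) → ℝ) (d : ℕ) : ℕ :=
  Nat.card {x : Fin n → S // (∀ i, x i ∈ Ideal.span {algebraMap R S γ}) ∧ D x 0 < (d : ℝ)}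

noncomputable def numCodes {R S : Type*} [CommRing R] [CommRing S] [Algebra R S]
    (Sbar : Subalgebra R S) {n : ℕ} (D : (Fin n → S) → (Fin n → S) → ℝ) (k d : ℕ) : ℕ :=
  Nat.card {C : Submodule ↥Sbar (Fin n → S) //
    Module.Free ↥Sbar ↥C ∧ mu ↥Sbar C = k ∧ (d : ℝ) ≤ minDist D (C : Set (Fin n → S))}

noncomputable def numBadCodes {R S : Type*} [CommRing R] [CommRing S] [Algebra R S]
    (Sbar : Subalgebra R S) {n : ℕ} (D : (Fin n → S) → (Fin n → S) → ℝ) (k d : ℕ) : ℕ :=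
  Nat.card {C : Submodule ↥Sbar (Fin n → S) //
    Module.Free ↥Sbar ↥C ∧ mu ↥Sbar C = k ∧ minDist D (C : Set (Fin n → S)) ≤ (d : ℝ) - 1}

noncomputable def densityCodes (s q ℓ : ℕ) {R S : Type*} [CommRing R] [CommRing S]
    [Algebra R S] (Sbar : Subalgebra R S) {n : ℕ} (D : (Fin n → S) → (Fin n → S) → ℝ)
    (N k d : ℕ) : ℝ :=
  (numCodes Sbar D k d : ℝ) / NN s (q ^ ℓ) ((N / ℓ : ℕ) : ℤ) (k : ℤ)

noncomputable def hammingD {S : Type*} {n : ℕ} (x y : Fin n → S) : ℝ :=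
  Nat.card {i : Fin n // x i ≠ y i}

noncomputable def rankD (R : Type*) [CommRing R] {S : Type*} [CommRing S] [Algebra R S]
    {n : ℕ} (x y : Fin n → S) : ℝ :=
  (mu R (Submodule.span R (Set.range (x - y))) : ℝ)

/-! ### First and second moments of random tuples -/

/-- All fibres of a surjective homomorphism have the size of its kernel. -/
lemma card_preimage_ker {A A' : Type*} [AddGroup A] [Finite A] [AddGroup A'] [Finite A']
    (f : A →+ A') (hf : Function.Surjective f) (T : Set A') :
    Nat.card {a // f a ∈ T} = Nat.card T * Nat.card {a // f a = 0} := by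
  classical
  have := Fintype.ofFinite T
  have e : {a // f a ∈ T} ≃ Σ t : T, {a : {a // f a ∈ T} // (⟨f a, a.2⟩ : T) = t} :=
    (Equiv.sigmaFiberEquiv (fun a : {a // f a ∈ T} => (⟨f a, a.2⟩ : T))).symm
  rw [Nat.card_congr e, Nat.card_sigma]
  have key : ∀ t : T, Nat.card {a : {a // f a ∈ T} // (⟨f a, a.2⟩ : T) = t}
      = Nat.card {a // f a = 0} := by
    rintro ⟨t, ht⟩
    obtain ⟨a₀, rfl⟩ := hf t
    refine Nat.card_congr ⟨fun a => ⟨a.1.1 - a₀, ?_⟩, fun a => ⟨⟨a.1 + a₀, ?_⟩, ?_⟩, ?_, ?_⟩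
    · have := congrArg Subtype.val a.2
      simp only at this
      simp [this]
    · simp [a.2, ht]
    · simp [a.2]
    · intro a; simp
    · intro a; simp
  simp [key]

lemma card_preimage_mul {A A' : Type*} [AddGroup A] [Finite A] [AddGroup A'] [Finite A']
    (f : A →+ A') (hf : Function.Surjective f) (T : Set A') :
    Nat.card {a // f a ∈ T} * Nat.card A' = Nat.card T * Nat.card A := by
  have h := card_preimage_ker f hf Set.univ
  have h1 : Nat.card {a // f a ∈ (Set.univ : Set A')} = Nat.card A :=
    Nat.card_congr (Equiv.subtypeUnivEquiv (fun a => Set.mem_univ _))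
  rw [h1, Nat.card_univ] at h
  rw [card_preimage_ker f hf T, h]; ring

/-- The tuples all of whose nontrivial `F`-linear combinations avoid `B`. -/
def goodTuples (F : Type*) {V : Type*} [Field F] [AddCommGroup V] [Module F V]
    (B : Set V) (k : ℕ) : Set (Fin k → V) :=
  {v | ∀ c : Fin k → F, c ≠ 0 → ∑ i, c i • v i ∉ B}

lemma card_good_le {F V : Type*} [Field F] [AddCommGroup V] [Module F V] [Finite V]
    (B : Set V) (k : ℕ) :
    (Nat.card (goodTuples F B k) : ℝ) ≤ (Nat.card V : ℝ) ^ k := by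
  have : Nat.card (goodTuples F B k) ≤ Nat.card (Fin k → V) := Finite.card_subtype_le _
  rw [Nat.card_fun, Nat.card_fin] at this
  exact_mod_cast this

section Moments

variable {F V : Type*} [Field F] [AddCommGroup V] [Module F V]

/-- The sum `∑ cᵢ vᵢ`, additive in the tuple `v`. -/
def evHom {k : ℕ} (c : Fin k → F) : (Fin k → V) →+ V where
  toFun v := ∑ i, c i • v i
  map_zero' := by simp
  map_add' := by intro x y; simp [Finset.sum_add_distrib]

lemma evHom_surjective {k : ℕ} (c : Fin k → F) (hc : c ≠ 0) :
    Function.Surjective (evHom (V := V) c) := by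
  classical
  obtain ⟨i, hi⟩ := Function.ne_iff.1 hc
  intro x
  refine ⟨Pi.single i ((c i)⁻¹ • x), ?_⟩
  change ∑ j, c j • (Pi.single i ((c i)⁻¹ • x) : Fin k → V) j = x
  rw [Finset.sum_eq_single i]
  · rw [Pi.single_eq_same, smul_smul, mul_inv_cancel₀ hi, one_smul]
  · intro j _ hj; simp [Pi.single_eq_of_ne hj]
  · simp

/-- Two non-proportional coefficient vectors can be evaluated independently. -/
lemma evHom_pair_surjective {k : ℕ} (c c' : Fin k → F) (h : LinearIndependent F ![c, c']) :
    Function.Surjective ((evHom (V := V) c).prod (evHom c')) := by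
  classical
  obtain ⟨g, hg⟩ := LinearMap.exists_leftInverse_of_injective
    (Fintype.linearCombination F ![c, c'])
    (LinearMap.ker_eq_bot.2 h.fintypeLinearCombination_injective)
  rintro ⟨x, y⟩
  set φ : (Fin k → F) →ₗ[F] V := (Fintype.linearCombination F ![x, y]) ∘ₗ g with hφ
  have hev : ∀ e : Fin k → F, evHom (V := V) e (fun i => φ (Pi.single i 1)) = φ e := by
    intro e
    change ∑ i, e i • φ (Pi.single i 1) = φ e
    conv_rhs => rw [pi_eq_sum_univ' e]
    rw [map_sum]
    refine Finset.sum_congr rfl fun i _ => ?_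
    rw [map_smul]
  have h0 : g c = Pi.single 0 1 := by
    have := LinearMap.congr_fun hg (Pi.single 0 1)
    simpa [Fintype.linearCombination_apply] using this
  have h1 : g c' = Pi.single 1 1 := by
    have := LinearMap.congr_fun hg (Pi.single 1 1)
    simpa [Fintype.linearCombination_apply] using this
  refine ⟨fun i => φ (Pi.single i 1), ?_⟩
  rw [AddMonoidHom.prod_apply, hev, hev, hφ]
  simp [h0, h1, Fintype.linearCombination_apply]

variable [Finite V]

/-- First moment: a nonzero combination of a uniform tuple is uniform in `V`. -/
lemma sum_ind_one {k : ℕ} [Fintype V] (B : Set V) [DecidablePred (· ∈ B)] (c : Fin k → F)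
    (hc : c ≠ 0) :
    (∑ v : Fin k → V, if evHom c v ∈ B then (1 : ℝ) else 0) * Nat.card V
      = Nat.card B * (Nat.card V : ℝ) ^ k := by
  classical
  have h := card_preimage_mul (evHom (V := V) c) (evHom_surjective c hc) B
  rw [Nat.card_fun, Nat.card_fin] at h
  rw [Finset.sum_boole, ← Fintype.card_subtype, ← Nat.card_eq_fintype_card]
  exact_mod_cast h

/-- Second moment: non-proportional combinations of a uniform tuple are independent. -/
lemma sum_ind_two {k : ℕ} [Fintype V] (B : Set V) [DecidablePred (· ∈ B)] (c c' : Fin k → F)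
    (h : LinearIndependent F ![c, c']) :
    (∑ v : Fin k → V, (if evHom c v ∈ B then (1 : ℝ) else 0) *
      (if evHom c' v ∈ B then (1 : ℝ) else 0)) * (Nat.card V : ℝ) ^ 2
      = (Nat.card B : ℝ) ^ 2 * (Nat.card V : ℝ) ^ k := by
  classical
  have h := card_preimage_mul _ (evHom_pair_surjective (V := V) c c' h) (B ×ˢ B)
  rw [Nat.card_fun, Nat.card_fin, Nat.card_prod, Nat.card_coe_set_eq, Set.ncard_prod,
    ← Nat.card_coe_set_eq] at h
  have e : ∀ v : Fin k → V, (if evHom c v ∈ B then (1 : ℝ) else 0) *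
      (if evHom c' v ∈ B then (1 : ℝ) else 0)
      = if ((evHom (V := V) c).prod (evHom c')) v ∈ B ×ˢ B then 1 else 0 := by
    intro v
    by_cases h1 : evHom c v ∈ B <;> by_cases h2 : evHom c' v ∈ B <;> simp [h1, h2]
  simp_rw [e]
  rw [Finset.sum_boole, ← Fintype.card_subtype, ← Nat.card_eq_fintype_card, sq, sq]
  exact_mod_cast h

/-- Two-sided moment bounds for the number of good tuples. With `Q = |F|`, `W = |V|`, `b = |B|` and
`y = (Q ^ k - 1) b / W`, the mean number of combinations falling in `B`, the proportion of good
tuples is at least `1 - y / (Q - 1)` and at most `1 / (1 + y / Q)`. -/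
theorem moment_bounds [Fintype F] (B : Set V)
    (hB : ∀ (a : F), a ≠ 0 → ∀ x ∈ B, a • x ∈ B) (k : ℕ) :
    ((Nat.card V : ℝ) ^ k - Nat.card (goodTuples F B k)) * ((Nat.card F - 1) * Nat.card V)
      ≤ ((Nat.card F : ℝ) ^ k - 1) * Nat.card B * (Nat.card V : ℝ) ^ k ∧
    (Nat.card (goodTuples F B k) : ℝ) *
      (Nat.card F * Nat.card V + ((Nat.card F : ℝ) ^ k - 1) * Nat.card B)
      ≤ Nat.card F * Nat.card V * (Nat.card V : ℝ) ^ k := by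
  classical
  have := Fintype.ofFinite V
  set Q : ℝ := (Nat.card F : ℝ) with hQ
  set W : ℝ := (Nat.card V : ℝ) with hW
  set b : ℝ := (Nat.card B : ℝ) with hb
  set G : ℝ := (Nat.card (goodTuples F B k) : ℝ) with hG
  set Cs : Finset (Fin k → F) := Finset.univ.filter (· ≠ 0) with hCs
  set ind : (Fin k → F) → (Fin k → V) → ℝ := fun c v => if evHom c v ∈ B then 1 else 0 with hind
  set X : (Fin k → V) → ℝ := fun v => ∑ c ∈ Cs, ind c v with hX
  set bad : Finset (Fin k → V) := Finset.univ.filter (· ∉ goodTuples F B k) with hbad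
  have hWpos : 0 < W := by rw [hW]; exact_mod_cast Nat.card_pos
  have hQ1 : 1 < Q := by
    rw [hQ, Nat.card_eq_fintype_card]; exact_mod_cast Fintype.one_lt_card
  have hb0 : 0 ≤ b := by positivity
  have hCscard : (Cs.card : ℝ) = Q ^ k - 1 := by
    have : Cs = Finset.univ.erase 0 := by ext; simp [hCs]
    rw [this, Finset.card_erase_of_mem (Finset.mem_univ _), Finset.card_univ, Fintype.card_fun,
      Fintype.card_fin, Nat.cast_sub, hQ, Nat.card_eq_fintype_card]
    · push_cast; rfl
    · exact Nat.one_le_pow _ _ Fintype.card_pos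
  have hbadcard : (bad.card : ℝ) = W ^ k - G := by
    have h1 := Finset.card_filter_add_card_filter_not (s := (Finset.univ : Finset (Fin k → V)))
      (· ∈ goodTuples F B k)
    have h2 : G = (Finset.univ.filter (· ∈ goodTuples F B k)).card := by
      rw [hG, Nat.card_eq_fintype_card, ← Set.toFinset_card]
      congr 2; ext; simp
    rw [h2, eq_sub_iff_add_eq]
    rw [Finset.card_univ, Fintype.card_fun, Fintype.card_fin] at h1
    rw [hW, Nat.card_eq_fintype_card, add_comm]
    exact_mod_cast h1
  have hindnn : ∀ c v, 0 ≤ ind c v := by intro c v; simp only [hind]; split_ifs <;> norm_num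
  have hXgood : ∀ v, v ∉ bad → X v = 0 := by
    intro v hv
    have hv : v ∈ goodTuples F B k := by simpa [hbad] using hv
    refine Finset.sum_eq_zero fun c hc => if_neg ?_
    exact hv c (by simpa [hCs] using hc)
  have hXsum : (∑ v ∈ bad, X v) * W = (Q ^ k - 1) * b * W ^ k := by
    have : ∑ v ∈ bad, X v = ∑ v, X v :=
      Finset.sum_subset (Finset.subset_univ _) fun v _ hv => hXgood v hv
    rw [this, hX, Finset.sum_comm, Finset.sum_mul,
      Finset.sum_congr rfl (fun c hc => sum_ind_one B c (by simpa [hCs] using hc)),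
      Finset.sum_const, nsmul_eq_mul, hCscard]
    ring
  -- A bad tuple has a whole punctured line of bad coefficient vectors.
  have hXbad : ∀ v ∈ bad, Q - 1 ≤ X v := by
    intro v hv
    simp only [hbad, Finset.mem_filter, Finset.mem_univ, true_and, goodTuples, Set.mem_ofPred_eq,
      not_forall, not_not] at hv
    obtain ⟨c, hc, hcB⟩ := hv
    have hinj : Set.InjOn (fun a : F => a • c) (Finset.univ.erase (0 : F) : Finset F) := by
      intro a _ a' _ h; exact smul_left_injective F hc h
    have hsub : (Finset.univ.erase (0 : F)).image (fun a : F => a • c) ⊆ Cs := by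
      intro x hx
      obtain ⟨a, ha, rfl⟩ := Finset.mem_image.1 hx
      simp only [hCs, Finset.mem_filter, Finset.mem_univ, true_and]
      exact smul_ne_zero (Finset.ne_of_mem_erase ha) hc
    calc Q - 1 = ∑ a ∈ Finset.univ.erase (0 : F), (1 : ℝ) := by
          rw [Finset.sum_const, Finset.card_erase_of_mem (Finset.mem_univ _), Finset.card_univ,
            nsmul_eq_mul, mul_one, Nat.cast_sub Fintype.card_pos, hQ, Nat.card_eq_fintype_card]
          simp
      _ = ∑ a ∈ Finset.univ.erase (0 : F), ind (a • c) v := by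
          refine Finset.sum_congr rfl fun a ha => ?_
          have : evHom (a • c) v = a • ∑ i, c i • v i := by
            change ∑ i, (a • c) i • v i = _
            rw [Finset.smul_sum]
            exact Finset.sum_congr rfl fun i _ => by simp [mul_smul]
          simp only [hind]
          rw [if_pos]
          rw [this]
          exact hB a (Finset.ne_of_mem_erase ha) _ hcB
      _ = ∑ x ∈ (Finset.univ.erase (0 : F)).image (fun a : F => a • c), ind x v :=
          (Finset.sum_image (f := fun x => ind x v) hinj).symm
      _ ≤ X v := Finset.sum_le_sum_of_subset_of_nonneg hsub fun x _ _ => hindnn x v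
  -- From here on `y` is `W` times the mean of `X`.
  set y : ℝ := (Q ^ k - 1) * b with hy
  have hy0 : 0 ≤ y := mul_nonneg (sub_nonneg.2 (one_le_pow₀ hQ1.le)) hb0
  constructor
  · rw [← hXsum, ← hbadcard, ← mul_assoc]
    refine mul_le_mul_of_nonneg_right ?_ hWpos.le
    rw [← nsmul_eq_mul]
    exact Finset.card_nsmul_le_sum _ _ _ hXbad
  · have hXsq : (∑ v ∈ bad, X v ^ 2) * W ^ 2 ≤ y * Q * W ^ k * W + y ^ 2 * W ^ k := by
      have h1 : ∑ v ∈ bad, X v ^ 2 = ∑ c ∈ Cs, ∑ c' ∈ Cs, ∑ v, ind c v * ind c' v := by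
        have : ∑ v ∈ bad, X v ^ 2 = ∑ v, X v ^ 2 :=
          Finset.sum_subset (Finset.subset_univ _) fun v _ hv => by rw [hXgood v hv]; norm_num
        rw [this]
        simp_rw [hX, sq, Finset.sum_mul_sum]
        rw [Finset.sum_comm]
        refine Finset.sum_congr rfl fun c _ => Finset.sum_comm
      have h2 : ∀ c ∈ Cs, (∑ c' ∈ Cs, ∑ v, ind c v * ind c' v) * W ^ 2
          ≤ Q * b * W ^ k * W + (Q ^ k - 1) * b ^ 2 * W ^ k := by
        intro c hc
        have hc0 : c ≠ 0 := by simpa [hCs] using hc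
        -- On the line `P` through `c` the two events need not be independent, and one of the
        -- indicators is bounded by `1`; off that line they are independent.
        set P : Finset (Fin k → F) := Finset.univ.image (fun a : F => a • c) with hP
        have hle : (P.card : ℝ) ≤ Q := by
          rw [hQ, Nat.card_eq_fintype_card]
          exact_mod_cast Finset.card_image_le
        have hone : ∀ c', (∑ v, ind c v * ind c' v) * W ^ 2 ≤ b * W ^ k * W := by
          intro c'
          rw [← sum_ind_one B c hc0, sq, ← mul_assoc]
          refine mul_le_mul_of_nonneg_right ?_ hWpos.le
          refine mul_le_mul_of_nonneg_right ?_ hWpos.le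
          refine Finset.sum_le_sum fun v _ => ?_
          refine mul_le_of_le_one_right (hindnn c v) ?_
          simp only [hind]; split_ifs <;> norm_num
        rw [Finset.sum_mul, ← Finset.sum_filter_add_sum_filter_not Cs (· ∈ P)]
        refine add_le_add ?_ ?_
        · calc _ ≤ ∑ c' ∈ Cs.filter (· ∈ P), b * W ^ k * W := Finset.sum_le_sum fun c' _ => hone c'
            _ = ((Cs.filter (· ∈ P)).card : ℝ) * (b * W ^ k * W) := by simp
            _ ≤ Q * (b * W ^ k * W) := by
                refine mul_le_mul_of_nonneg_right (le_trans ?_ hle) (by positivity)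
                exact_mod_cast Finset.card_le_card fun x hx => (Finset.mem_filter.1 hx).2
            _ = _ := by ring
        · calc _ = ∑ c' ∈ Cs.filter (· ∉ P), b ^ 2 * W ^ k := by
                refine Finset.sum_congr rfl fun c' hc' => sum_ind_two B c c' ?_
                rw [LinearIndependent.pair_iff' hc0]
                intro a ha
                exact (Finset.mem_filter.1 hc').2 (Finset.mem_image.2 ⟨a, Finset.mem_univ _, ha⟩)
            _ = ((Cs.filter (· ∉ P)).card : ℝ) * (b ^ 2 * W ^ k) := by simp
            _ ≤ (Q ^ k - 1) * (b ^ 2 * W ^ k) := by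
                rw [← hCscard]
                refine mul_le_mul_of_nonneg_right ?_ (by positivity)
                exact_mod_cast Finset.card_filter_le _ _
            _ = _ := by ring
      rw [h1, Finset.sum_mul]
      calc _ ≤ ∑ c ∈ Cs, (Q * b * W ^ k * W + (Q ^ k - 1) * b ^ 2 * W ^ k) :=
            Finset.sum_le_sum h2
        _ = _ := by rw [Finset.sum_const, nsmul_eq_mul, hCscard, hy]; ring
    -- Cauchy-Schwarz on the bad tuples, the support of `X`.
    have hcs := sq_sum_le_card_mul_sum_sq (s := bad) (f := X)
    rcases hy0.eq_or_lt with hy' | hy'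
    · rw [← hy', add_zero, mul_comm]
      exact mul_le_mul_of_nonneg_left (card_good_le B k) (by positivity)
    · have hT : 0 < W ^ k := by positivity
      have h3 : (y * W ^ k) ^ 2 ≤ bad.card * (y * Q * W ^ k * W + y ^ 2 * W ^ k) := by
        rw [← hXsum, mul_pow]
        calc _ ≤ (bad.card * ∑ v ∈ bad, X v ^ 2) * W ^ 2 :=
              mul_le_mul_of_nonneg_right hcs (by positivity)
          _ = bad.card * ((∑ v ∈ bad, X v ^ 2) * W ^ 2) := by ring
          _ ≤ _ := mul_le_mul_of_nonneg_left hXsq (by positivity)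
      rw [hbadcard] at h3
      have h4 : y * W ^ k ≤ (W ^ k - G) * (Q * W + y) := by
        have : (y * W ^ k) * (y * W ^ k) ≤ (y * W ^ k) * ((W ^ k - G) * (Q * W + y)) := by
          nlinarith [h3]
        exact le_of_mul_le_mul_left this (by positivity)
      nlinarith [h4]

end Moments

/-! ### Size of balls in the rank metric -/

/-- The ball of radius `r` around `0` in the rank metric over fields. -/
def lowRank (K : Type*) {E : Type*} [Field K] [AddCommGroup E] [Module K E] (n r : ℕ) :
    Set (Fin n → E) :=
  {x | Module.finrank K (Submodule.span K (Set.range x)) ≤ r}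

section Ball

variable {K E : Type*} [Field K] [Finite K] [AddCommGroup E] [Module K E] [Finite E]

/-- A tuple of rank at most `r` is spanned by `r` of its entries, so it is determined by those
entries and the coefficients of the others. -/
lemma card_lowRank_le {n r : ℕ} (hr : r ≤ n) :
    Nat.card (lowRank K (E := E) n r)
      ≤ n.choose r * (Nat.card E ^ r * (Nat.card K ^ r) ^ (n - r)) := by
  classical
  have := Fintype.ofFinite E
  have := Fintype.ofFinite K
  set Φ : (I : Finset (Fin n)) → (I → E) × ({i // i ∉ I} → I → K) → (Fin n → E) :=
    fun I p i => if h : i ∈ I then p.1 ⟨i, h⟩ else ∑ j, p.2 ⟨i, h⟩ j • p.1 j with hΦ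
  have hcov : (Set.toFinset (lowRank K (E := E) n r)) ⊆
      (Finset.powersetCard r Finset.univ).biUnion (fun I => Finset.univ.image (Φ I)) := by
    intro x hx
    have hx' : x ∈ lowRank K n r := Set.mem_toFinset.1 hx
    replace hx : Module.finrank K (Submodule.span K (Set.range x)) ≤ r := hx'
    obtain ⟨κ, a, ha, hspan, hli⟩ := exists_linearIndependent' K x
    have : Finite κ := Finite.of_injective a ha
    have := Fintype.ofFinite κ
    have hκ : Fintype.card κ ≤ r := by
      rw [← hspan, finrank_span_eq_card hli] at hx
      exact hx
    obtain ⟨I, hI, hIc⟩ := Finset.exists_superset_card_eq (s := Finset.univ.image a) (n := r)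
      (le_trans Finset.card_image_le (by rwa [Finset.card_univ])) (by simpa using hr)
    have hmem : ∀ i, x i ∈ Submodule.span K (Set.range fun j : I => x j) := by
      intro i
      have h1 : x i ∈ Submodule.span K (Set.range (x ∘ a)) := by
        rw [hspan]; exact Submodule.subset_span ⟨i, rfl⟩
      refine Submodule.span_mono ?_ h1
      rintro _ ⟨t, rfl⟩
      exact ⟨⟨a t, hI (Finset.mem_image_of_mem a (Finset.mem_univ t))⟩, rfl⟩
    choose c hc using fun i => (Submodule.mem_span_range_iff_exists_fun K).1 (hmem i)
    refine Finset.mem_biUnion.2 ⟨I, by simp [Finset.mem_powersetCard, hIc],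
      Finset.mem_image.2 ⟨(fun j => x j, fun i => c i), Finset.mem_univ _, ?_⟩⟩
    ext i
    by_cases h : i ∈ I
    · simp [hΦ, h]
    · simp only [hΦ, h, dite_false]; exact hc i
  rw [Nat.card_eq_fintype_card, ← Set.toFinset_card]
  refine (Finset.card_le_card hcov).trans (Finset.card_biUnion_le.trans ?_)
  calc _ ≤ ∑ I ∈ Finset.powersetCard r (Finset.univ : Finset (Fin n)),
        (Nat.card E ^ r * (Nat.card K ^ r) ^ (n - r)) := by
        refine Finset.sum_le_sum fun I hI => ?_
        have hIc := (Finset.mem_powersetCard.1 hI).2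
        refine Finset.card_image_le.trans (le_of_eq ?_)
        rw [Finset.card_univ, Fintype.card_prod, Fintype.card_fun, Fintype.card_fun,
          Fintype.card_fun, Fintype.card_coe, hIc, Fintype.card_subtype_compl, Fintype.card_fin,
          Fintype.card_coe, hIc, Nat.card_eq_fintype_card, Nat.card_eq_fintype_card]
    _ = _ := by simp

/-- Independent first `r` entries, followed by arbitrary combinations of them, give distinct
tuples of rank `r`. -/
lemma le_card_lowRank {r p m : ℕ} (hm : Module.finrank K E = m) (hr : r ≤ m) :
    (∏ i : Fin r, (Nat.card K ^ m - Nat.card K ^ (i : ℕ))) * (Nat.card K ^ r) ^ p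
      ≤ Nat.card (lowRank K (E := E) (r + p) r) := by
  classical
  have := Fintype.ofFinite E
  have := Fintype.ofFinite K
  have h1 := card_linearIndependent (K := K) (V := E) (k := r) (by rw [hm]; exact hr)
  rw [hm, ← Nat.card_eq_fintype_card] at h1
  have h2 : Nat.card (Fin p → Fin r → K) = (Nat.card K ^ r) ^ p := by
    rw [Nat.card_fun, Nat.card_fun, Nat.card_fin, Nat.card_fin]
  rw [← h1, ← h2, ← Nat.card_prod]
  refine Nat.card_le_card_of_injective (fun z => ⟨Fin.append z.1.1
    (fun i => ∑ j, z.2 i j • z.1.1 j), ?_⟩) ?_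
  · have hsub : Submodule.span K (Set.range (Fin.append z.1.1
        (fun i => ∑ j, z.2 i j • z.1.1 j))) ≤ Submodule.span K (Set.range z.1.1) := by
      rw [Submodule.span_le]
      rintro _ ⟨i, rfl⟩
      refine Fin.addCases (fun i => ?_) (fun i => ?_) i
      · rw [Fin.append_left]; exact Submodule.subset_span ⟨i, rfl⟩
      · rw [Fin.append_right]
        exact Submodule.sum_mem _ fun j _ =>
          Submodule.smul_mem _ _ (Submodule.subset_span ⟨j, rfl⟩)
    change Module.finrank K _ ≤ r
    refine (Submodule.finrank_mono hsub).trans ?_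
    exact (finrank_range_le_card z.1.1).trans (by simp)
  · rintro ⟨⟨w, hw⟩, a⟩ ⟨⟨w', hw'⟩, a'⟩ h
    have h := congrArg Subtype.val h
    simp only at h
    have hww : w = w' := by
      ext i; simpa using congrFun h (Fin.castAdd p i)
    subst hww
    have haa : a = a' := by
      ext i : 1
      have := congrFun h (Fin.natAdd r i)
      simp only [Fin.append_right] at this
      exact hw.fintypeLinearCombination_injective
        (by simpa [Fintype.linearCombination_apply] using this)
    rw [haa]

end Ball

/-! ### Chain rings and reduction to the residue field -/

section Chain

variable {s q : ℕ} {A : Type*} [CommRing A] {g : A}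

lemma IsChainData.pow_ne_zero (h : IsChainData s q A g) {j : ℕ} (hj : j < s) : g ^ j ≠ 0 := by
  intro h0
  apply h.2.2.2.1
  rw [show s - 1 = j + (s - 1 - j) by omega, pow_add, h0, zero_mul]

lemma IsChainData.mem_of_mul_eq_zero (h : IsChainData s q A g) {j : ℕ} (hj : j < s) {x : A}
    (hx : g ^ j * x = 0) : x ∈ Ideal.span {g} := by
  refine h.2.1 x fun hu => h.pow_ne_zero hj ?_
  exact (hu.mul_left_eq_zero).1 hx

lemma IsChainData.isUnit (h : IsChainData s q A g) {x : A} (hx : x ∉ Ideal.span {g}) :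
    IsUnit x := by
  by_contra hu; exact hx (h.2.1 x hu)

/-- Every nonzero tuple is a power of the uniformizer times a primitive tuple. -/
lemma IsChainData.factor (h : IsChainData s q A g) {ι : Type*} {c : ι → A} (hc : c ≠ 0) :
    ∃ i < s, ∃ c' : ι → A, c = (fun t => g ^ i * c' t) ∧ ∃ j, c' j ∉ Ideal.span {g} := by
  by_contra hcon
  push Not at hcon
  have key : ∀ i ≤ s, ∃ c' : ι → A, c = fun t => g ^ i * c' t := by
    intro i
    induction i with
    | zero => intro _; exact ⟨c, by simp⟩
    | succ i ih =>
      intro hi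
      obtain ⟨c', hc'⟩ := ih (by omega)
      have := hcon i (by omega) c' hc'
      choose e he using fun j => Ideal.mem_span_singleton'.1 (this j)
      refine ⟨e, ?_⟩
      rw [hc']; funext t; rw [← he t]; ring
  obtain ⟨c', hc'⟩ := key s le_rfl
  apply hc
  rw [hc']; funext t; simp [h.2.2.1]

/-- The annihilator of the uniformizer lies in every nonzero power of the maximal ideal. -/
lemma IsChainData.ann_le (h : IsChainData s q A g) {x : A} (hx : g * x = 0) {i : ℕ}
    (hi : i < s) : x ∈ Ideal.span {g ^ i} := by
  by_cases h0 : x = 0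
  · simp [h0]
  · obtain ⟨j, hj, c', hc', t, ht⟩ := h.factor (c := fun _ : Unit => x)
      (fun h' => h0 (congrFun h' ()))
    have hx' : x = g ^ j * c' t := congrFun hc' t
    have hjs : i ≤ j := by
      by_contra hlt
      have hz : g ^ (j + 1) * c' t = 0 := by rw [pow_succ', mul_assoc, ← hx', hx]
      exact ht (h.mem_of_mul_eq_zero (by omega) hz)
    rw [Ideal.mem_span_singleton, hx']
    exact Dvd.dvd.mul_right (pow_dvd_pow g hjs) _

/-- Multiplication by `g` from `(g ^ i)` to `(g ^ (i + 1))`. -/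
def mulGen (g : A) (i : ℕ) : Ideal.span {g ^ i} →+ Ideal.span {g ^ (i + 1)} where
  toFun x := ⟨g * x, by
    obtain ⟨y, hy⟩ := Ideal.mem_span_singleton'.1 x.2
    rw [← hy]; exact Ideal.mem_span_singleton'.2 ⟨y, by ring⟩⟩
  map_zero' := by simp
  map_add' := by intro x y; ext; simp [mul_add]

/-- The quotients of successive powers of the maximal ideal all have the size of the annihilator
of the uniformizer. -/
lemma IsChainData.card_pow [Finite A] (h : IsChainData s q A g) {i : ℕ} (hi : i < s) :
    Nat.card (Ideal.span {g ^ i})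
      = Nat.card (Ideal.span {g ^ (i + 1)}) * Nat.card {x : A // g * x = 0} := by
  have hsurj : Function.Surjective (mulGen g i) := by
    rintro ⟨y, hy⟩
    obtain ⟨z, rfl⟩ := Ideal.mem_span_singleton'.1 hy
    refine ⟨⟨z * g ^ i, Ideal.mem_span_singleton'.2 ⟨z, rfl⟩⟩, ?_⟩
    ext; simp only [mulGen, AddMonoidHom.coe_mk, ZeroHom.coe_mk]; ring
  have h1 := card_preimage_ker (mulGen g i) hsurj Set.univ
  rw [Nat.card_univ, Nat.card_congr (Equiv.subtypeUnivEquiv (fun a => Set.mem_univ _))] at h1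
  rw [h1]
  congr 1
  refine Nat.card_congr ⟨fun x => ⟨x.1.1, ?_⟩, fun x => ⟨⟨x.1, h.ann_le x.2 hi⟩, ?_⟩, ?_, ?_⟩
  · exact congrArg Subtype.val x.2
  · exact Subtype.ext x.2
  · intro x; rfl
  · intro x; rfl

lemma IsChainData.card_span [Finite A] (h : IsChainData s q A g) (hs : 1 ≤ s) (hq : 0 < q) :
    Nat.card (Ideal.span {g}) = q ^ (s - 1) ∧ Nat.card A = q ^ s := by
  have h0 := h.card_pow (i := 0) (by omega)
  have hA : Nat.card (Ideal.span {g ^ 0}) = Nat.card A := by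
    rw [pow_zero, Ideal.span_singleton_one]
    exact Nat.card_congr Submodule.topEquiv.toEquiv
  have hquot : Nat.card A = q * Nat.card (Ideal.span {g}) := by
    rw [← h.2.2.2.2, Submodule.card_eq_card_quotient_mul_card (Ideal.span {g}), mul_comm]
  have hpos : 0 < Nat.card (Ideal.span {g}) := Nat.card_pos
  have hann : Nat.card {x : A // g * x = 0} = q := by
    rw [hA, zero_add, pow_one, hquot, mul_comm] at h0
    exact (Nat.eq_of_mul_eq_mul_left hpos h0).symm
  have hall : ∀ i ≤ s, Nat.card A = q ^ i * Nat.card (Ideal.span {g ^ i}) := by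
    intro i
    induction i with
    | zero => intro _; rw [hA]; simp
    | succ i ih =>
      intro hi
      rw [ih (by omega), h.card_pow (by omega), hann]; ring
  have hcard : Nat.card A = q ^ s := by
    rw [hall s le_rfl, h.2.2.1]
    simp
  refine ⟨?_, hcard⟩
  rw [hquot, show s = (s - 1) + 1 by omega, pow_succ, mul_comm] at hcard
  simpa using Nat.eq_of_mul_eq_mul_right hq hcard

/-- `π` exhibits `F` as the quotient of `A` by the ideal generated by `g`. -/
structure IsRed {A F : Type*} [CommRing A] [CommRing F] (g : A) (π : A →+* F) : Prop where
  surj : Function.Surjective π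
  ker : ∀ a, π a = 0 ↔ a ∈ Ideal.span {g}

end Chain

section Reduction

variable {s q₁ q₂ : ℕ} {A S F E : Type*} [CommRing A] [CommRing S] [Field F] [Field E]
  [Algebra A S] [Algebra F E] {g : A} {πA : A →+* F} {πS : S →+* E}

/-- Entrywise reduction of a vector. -/
def redVec (πS : S →+* E) (n : ℕ) : (Fin n → S) →+ (Fin n → E) where
  toFun x j := πS (x j)
  map_zero' := by ext; simp
  map_add' := by intro x y; ext; simp

/-- Entrywise reduction of a tuple of vectors. -/
def redTup (πS : S →+* E) (n k : ℕ) : (Fin k → Fin n → S) →+ (Fin k → Fin n → E) where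
  toFun v i := redVec πS n (v i)
  map_zero' := by ext; simp
  map_add' := by intro x y; ext; simp

lemma redVec_sum (hcomp : ∀ a, πS (algebraMap A S a) = algebraMap F E (πA a)) {n k : ℕ}
    (c : Fin k → A) (v : Fin k → Fin n → S) :
    redVec πS n (∑ i, c i • v i) = ∑ i, πA (c i) • redVec πS n (v i) := by
  rw [map_sum]
  refine Finset.sum_congr rfl fun i _ => ?_
  ext j
  change πS (c i • v i j) = πA (c i) • πS (v i j)
  rw [Algebra.smul_def, Algebra.smul_def, map_mul, hcomp]

lemma redVec_surjective (hS : Function.Surjective πS) (n : ℕ) :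
    Function.Surjective (redVec πS n) := by
  intro y
  choose x hx using fun j => hS (y j)
  exact ⟨x, funext hx⟩

lemma redTup_surjective (hS : Function.Surjective πS) (n k : ℕ) :
    Function.Surjective (redTup πS n k) := by
  intro y
  choose x hx using fun j => redVec_surjective hS n (y j)
  exact ⟨x, funext hx⟩

lemma redVec_ker (hS : IsRed (algebraMap A S g) πS) {n : ℕ} {x : Fin n → S}
    (hx : redVec πS n x = 0) : ∃ z : Fin n → S, x = g • z := by
  choose z hz using fun j => Ideal.mem_span_singleton'.1 ((hS.ker (x j)).1 (congrFun hx j))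
  refine ⟨z, funext fun j => ?_⟩
  rw [Pi.smul_apply, Algebra.smul_def, ← hz j, mul_comm]

lemma smul_pow_eq_zero (hcS : IsChainData s q₂ S (algebraMap A S g))
    (hS : IsRed (algebraMap A S g) πS) {n : ℕ} {x : Fin n → S} {j : ℕ} (hj : j < s)
    (hx : g ^ j • x = 0) : redVec πS n x = 0 := by
  funext t
  refine (hS.ker (x t)).2 (hcS.mem_of_mul_eq_zero hj ?_)
  have := congrFun hx t
  rwa [Pi.smul_apply, Algebra.smul_def, map_pow] at this

/-- Linear independence is detected on reductions: a nontrivial relation is a power of the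
uniformizer times a primitive one, and conversely a relation between the reductions becomes a
relation after multiplication by `g ^ (s - 1)`. -/
lemma li_reduce (hs : 1 ≤ s) (hcA : IsChainData s q₁ A g)
    (hcS : IsChainData s q₂ S (algebraMap A S g))
    (hA : IsRed g πA) (hS : IsRed (algebraMap A S g) πS)
    (hcomp : ∀ a, πS (algebraMap A S a) = algebraMap F E (πA a)) {n k : ℕ}
    (v : Fin k → Fin n → S) :
    LinearIndependent A v ↔ LinearIndependent F (redTup πS n k v) := by
  rw [Fintype.linearIndependent_iff, Fintype.linearIndependent_iff]
  constructor
  · intro h c hc i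
    choose e he using fun i => hA.surj (c i)
    have h0 : redVec πS n (∑ i, e i • v i) = 0 := by
      rw [redVec_sum hcomp, ← hc]
      exact Finset.sum_congr rfl fun i _ => by rw [he]; rfl
    obtain ⟨z, hz⟩ := redVec_ker hS h0
    have h1 : ∑ i, (g ^ (s - 1) * e i) • v i = 0 := by
      simp_rw [mul_smul]
      rw [← Finset.smul_sum, hz, ← mul_smul, ← pow_succ, show s - 1 + 1 = s by omega,
        hcA.2.2.1, zero_smul]
    rw [← he i]
    exact (hA.ker _).2 (hcA.mem_of_mul_eq_zero (by omega) (h _ h1 i))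
  · intro h c hc
    by_contra hne
    have hne : c ≠ 0 := fun h' => hne (congrFun h')
    obtain ⟨i, hi, c', rfl, j, hj⟩ := hcA.factor hne
    have h1 : g ^ i • ∑ t, c' t • v t = 0 := by
      rw [Finset.smul_sum, ← hc]
      exact Finset.sum_congr rfl fun t _ => by rw [mul_smul]
    have h2 := smul_pow_eq_zero hcS hS hi h1
    rw [redVec_sum hcomp] at h2
    exact hj ((hA.ker _).1 (h (fun t => πA (c' t)) h2 j))

lemma card_redTup (hS : Function.Surjective πS) [Finite S] [Finite E] (n k : ℕ)
    (T : Set (Fin k → Fin n → E)) :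
    Nat.card {v : Fin k → Fin n → S // redTup πS n k v ∈ T}
      = Nat.card T * (Nat.card {a // πS a = 0} ^ n) ^ k := by
  rw [card_preimage_ker _ (redTup_surjective hS n k)]
  congr 1
  have e : {v : Fin k → Fin n → S // redTup πS n k v = 0} ≃ (Fin k → Fin n → {a // πS a = 0}) :=
    { toFun := fun v i j => ⟨v.1 i j, congrFun (congrFun v.2 i) j⟩
      invFun := fun w => ⟨fun i j => (w i j).1, by
        funext i j; exact (w i j).2⟩
      left_inv := fun v => rfl
      right_inv := fun w => rfl }
  rw [Nat.card_congr e, Nat.card_fun, Nat.card_fun, Nat.card_fin, Nat.card_fin]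

end Reduction

/-! ### Rank, distance and codes under reduction -/

section Rank

/-- A generating family can be padded with zeros, so `mu` is monotone in the length. -/
lemma mu_le_iff {A M : Type*} [CommRing A] [AddCommGroup M] [Module A M] [Finite M]
    (C : Submodule A M) (r : ℕ) :
    mu A C ≤ r ↔ ∃ f : Fin r → M, Submodule.span A (Set.range f) = C := by
  constructor
  · intro h
    have hne : {k : ℕ | ∃ f : Fin k → M, Submodule.span A (Set.range f) = C}.Nonempty := by
      obtain ⟨k, f, hf⟩ := Submodule.fg_iff_exists_fin_generating_family.1
        (⟨(C : Set M).toFinite.toFinset, by simp⟩ : C.FG)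
      exact ⟨k, f, hf⟩
    obtain ⟨f, hf⟩ := Nat.sInf_mem hne
    change (_ : ℕ) ≤ r at h
    refine ⟨fun i => if hi : (i : ℕ) < sInf {k : ℕ | ∃ f : Fin k → M,
      Submodule.span A (Set.range f) = C} then f ⟨i, hi⟩ else 0, ?_⟩
    apply le_antisymm
    · rw [Submodule.span_le]
      rintro _ ⟨i, rfl⟩
      dsimp only
      split_ifs with hi
      · exact hf.le (Submodule.subset_span ⟨_, rfl⟩)
      · exact C.zero_mem
    · conv_lhs => rw [← hf]
      apply Submodule.span_mono
      rintro _ ⟨i, rfl⟩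
      exact ⟨⟨i, lt_of_lt_of_le i.2 h⟩, by simp⟩
  · intro h
    exact Nat.sInf_le h

lemma mu_smul_le {R S : Type*} [CommRing R] [CommRing S] [Algebra R S] [Finite S] {n : ℕ}
    (a : S) (x : Fin n → S) :
    mu R (Submodule.span R (Set.range (fun i => a * x i)))
      ≤ mu R (Submodule.span R (Set.range x)) := by
  obtain ⟨f, hf⟩ := (mu_le_iff (Submodule.span R (Set.range x)) _).1 le_rfl
  refine (mu_le_iff _ _).2 ⟨fun i => a * f i, ?_⟩
  have key : ∀ {t : ℕ} (y : Fin t → S), Submodule.span R (Set.range (fun i => a * y i))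
      = (Submodule.span R (Set.range y)).map (LinearMap.mulLeft R a) := by
    intro t y
    rw [Submodule.map_span, ← Set.range_comp]; rfl
  rw [key, key, hf]

variable {s q₀ q₂ : ℕ} {R S K E : Type*} [CommRing R] [CommRing S] [Field K] [Field E]
  [Algebra R S] [Algebra K E] {g : R} {πR : R →+* K} {πS : S →+* E}

/-- On the socle `g ^ (s - 1) S`, which is a copy of the residue field, the rank over `R` is the
rank of the reduction over the residue field of `R`. -/
lemma rank_socle [Finite S] (hs : 1 ≤ s) (hcS : IsChainData s q₂ S (algebraMap R S g))
    (hR : IsRed g πR) (hS : IsRed (algebraMap R S g) πS)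
    (hcomp : ∀ a, πS (algebraMap R S a) = algebraMap K E (πR a)) {n : ℕ} (r : ℕ)
    (x : Fin n → S) :
    mu R (Submodule.span R (Set.range (fun i => algebraMap R S g ^ (s - 1) * x i))) ≤ r ↔
      redVec πS n x ∈ lowRank K n r := by
  set G := algebraMap R S g with hG
  have : Finite E := Finite.of_surjective πS hS.surj
  have hzero : ∀ z : S, πS z = 0 → G ^ (s - 1) * z = 0 := by
    intro z hz
    obtain ⟨w, rfl⟩ := Ideal.mem_span_singleton'.1 ((hS.ker z).1 hz)
    rw [mul_comm w, ← mul_assoc, ← pow_succ, show s - 1 + 1 = s by omega, hcS.2.2.1, zero_mul]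
  have hsum : ∀ {t : ℕ} (a : Fin t → R) (w : Fin t → S),
      πS (∑ j, a j • w j) = ∑ j, πR (a j) • πS (w j) := by
    intro t a w
    rw [map_sum]
    exact Finset.sum_congr rfl fun j _ => by
      rw [Algebra.smul_def, Algebra.smul_def, map_mul, hcomp]
  have hlift : ∀ {t : ℕ} (a : Fin t → R) (w : Fin t → S) (y : S),
      πS y = ∑ j, πR (a j) • πS (w j) → G ^ (s - 1) * y = ∑ j, a j • (G ^ (s - 1) * w j) := by
    intro t a w y hy
    have h0 := hzero (y - ∑ j, a j • w j) (by rw [map_sub, hsum, hy, sub_self])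
    rw [mul_sub, sub_eq_zero, Finset.mul_sum] at h0
    rw [h0]
    exact Finset.sum_congr rfl fun j _ => by rw [mul_smul_comm]
  rw [mu_le_iff]
  constructor
  · rintro ⟨f, hf⟩
    have hfm : ∀ j, ∃ w, f j = G ^ (s - 1) * w := by
      intro j
      have hmem : f j ∈ Submodule.span R (Set.range (fun i => G ^ (s - 1) * x i)) := by
        rw [← hf]; exact Submodule.subset_span ⟨j, rfl⟩
      obtain ⟨c, hc⟩ := (Submodule.mem_span_range_iff_exists_fun R).1 hmem
      refine ⟨∑ i, c i • x i, ?_⟩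
      rw [← hc, Finset.mul_sum]
      exact Finset.sum_congr rfl fun i _ => by rw [mul_smul_comm]
    choose w hw using hfm
    have hx : ∀ i, ∃ a : Fin r → R, πS (x i) = ∑ j, πR (a j) • πS (w j) := by
      intro i
      have hmem : G ^ (s - 1) * x i ∈ Submodule.span R (Set.range f) := by
        rw [hf]; exact Submodule.subset_span ⟨i, rfl⟩
      obtain ⟨a, ha⟩ := (Submodule.mem_span_range_iff_exists_fun R).1 hmem
      refine ⟨a, ?_⟩
      have h0 : G ^ (s - 1) * (x i - ∑ j, a j • w j) = 0 := by
        rw [mul_sub, ← ha, Finset.mul_sum, sub_eq_zero]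
        exact Finset.sum_congr rfl fun j _ => by rw [hw, mul_smul_comm]
      have h1 := (hS.ker _).2 (hcS.mem_of_mul_eq_zero (by omega) h0)
      rwa [map_sub, hsum, sub_eq_zero] at h1
    have hsub : Submodule.span K (Set.range (redVec πS n x)) ≤
        Submodule.span K (Set.range fun j => πS (w j)) := by
      rw [Submodule.span_le]
      rintro _ ⟨i, rfl⟩
      obtain ⟨a, ha⟩ := hx i
      change πS (x i) ∈ _
      rw [ha]
      exact Submodule.sum_mem _ fun j _ => Submodule.smul_mem _ _ (Submodule.subset_span ⟨j, rfl⟩)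
    change Module.finrank K _ ≤ r
    exact (Submodule.finrank_mono hsub).trans ((finrank_range_le_card _).trans (by simp))
  · intro hx
    obtain ⟨u, hu⟩ : ∃ u : Fin r → E, Submodule.span K (Set.range u)
        = Submodule.span K (Set.range (redVec πS n x)) := by
      rw [← mu_le_iff]
      refine le_trans ?_ hx
      set U := Submodule.span K (Set.range (redVec πS n x))
      refine Nat.sInf_le ⟨fun i => (Module.finBasis K U i : E), ?_⟩
      have := congrArg (Submodule.map U.subtype) (Module.finBasis K U).span_eq
      rw [Submodule.map_span, ← Set.range_comp, Submodule.map_top, Submodule.range_subtype] at this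
      exact this
    choose w hw using fun j => hS.surj (u j)
    refine ⟨fun j => G ^ (s - 1) * w j, le_antisymm ?_ ?_⟩
    · rw [Submodule.span_le]
      rintro _ ⟨j, rfl⟩
      have hmem : u j ∈ Submodule.span K (Set.range (redVec πS n x)) := by
        rw [← hu]; exact Submodule.subset_span ⟨j, rfl⟩
      obtain ⟨c, hc⟩ := (Submodule.mem_span_range_iff_exists_fun K).1 hmem
      choose e he using fun i => hR.surj (c i)
      have := hlift e x (w j) (by rw [hw, ← hc]; simp_rw [he]; rfl)
      simp only [SetLike.mem_coe]
      rw [this]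
      exact Submodule.sum_mem _ fun i _ => Submodule.smul_mem _ _ (Submodule.subset_span ⟨i, rfl⟩)
    · rw [Submodule.span_le]
      rintro _ ⟨i, rfl⟩
      have hmem : redVec πS n x i ∈ Submodule.span K (Set.range u) := by
        rw [hu]; exact Submodule.subset_span ⟨i, rfl⟩
      obtain ⟨c, hc⟩ := (Submodule.mem_span_range_iff_exists_fun K).1 hmem
      choose e he using fun i => hR.surj (c i)
      have := hlift e w (x i) (by simp_rw [he, hw]; exact hc.symm)
      simp only [SetLike.mem_coe]
      rw [this]
      exact Submodule.sum_mem _ fun i _ => Submodule.smul_mem _ _ (Submodule.subset_span ⟨i, rfl⟩)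

lemma lowRank_smul {F : Type*} [Field F] [Algebra F E] [Finite E] {n r : ℕ} (a : F)
    (x : Fin n → E) (hx : x ∈ lowRank K n r) : a • x ∈ lowRank K n r := by
  change Module.finrank K _ ≤ r
  have key : Submodule.span K (Set.range (a • x))
      = (Submodule.span K (Set.range x)).map (LinearMap.mulLeft K (algebraMap F E a)) := by
    rw [Submodule.map_span, ← Set.range_comp]
    congr 2
    funext i
    simp [Algebra.smul_def]
  rw [key]
  exact (Submodule.finrank_map_le _ _).trans hx

end Rank

section Codes

/-- By linearity the minimum distance is the least rank of a nonzero codeword. A nonzero codeword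
must exist, since the distance of the zero code is the junk value `sInf ∅ = 0`. -/
lemma le_minDist_iff {R S A : Type*} [CommRing R] [CommRing S] [Algebra R S] [CommRing A]
    [Algebra A S] {n d : ℕ} (C : Submodule A (Fin n → S)) (hC : ∃ x ∈ C, x ≠ 0) :
    (d : ℝ) ≤ minDist (rankD R) (C : Set (Fin n → S)) ↔
      ∀ x ∈ C, x ≠ 0 → d ≤ mu R (Submodule.span R (Set.range x)) := by
  constructor
  · intro h x hx h0
    have hb : minDist (rankD R) (C : Set (Fin n → S)) ≤ rankD R x 0 := by
      refine csInf_le ⟨0, ?_⟩ ⟨x, hx, 0, C.zero_mem, h0, rfl⟩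
      rintro _ ⟨x, _, y, _, _, rfl⟩
      exact Nat.cast_nonneg _
    have := h.trans hb
    rw [rankD, sub_zero] at this
    exact_mod_cast this
  · intro h
    obtain ⟨x, hx, h0⟩ := hC
    refine le_csInf ⟨_, x, hx, 0, C.zero_mem, h0, rfl⟩ ?_
    rintro _ ⟨x, hx, y, hy, hxy, rfl⟩
    rw [rankD]
    exact_mod_cast h (x - y) (C.sub_mem hx hy) (sub_ne_zero.2 hxy)

variable {s q₁ q₂ : ℕ} {R A S K F E : Type*} [CommRing R] [CommRing A] [CommRing S]
  [Field K] [Field F] [Field E]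
  [Algebra R S] [Algebra A S] [Algebra K E] [Algebra F E] {g : R} {gA : A}
  {πR : R →+* K} {πA : A →+* F} {πS : S →+* E}

/-- The minimum distance of a free code is read off its reduction. A codeword is a power of the
uniformizer times one with nonzero reduction, and multiplying up into the socle can only lower the
rank, so the minimum is attained on the socle. -/
lemma le_minDist_span_iff [Finite S] (hs : 1 ≤ s) (hg : algebraMap A S gA = algebraMap R S g)
    (hcA : IsChainData s q₁ A gA) (hcS : IsChainData s q₂ S (algebraMap R S g))
    (hR : IsRed g πR) (hA : IsRed gA πA) (hS : IsRed (algebraMap R S g) πS)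
    (hcompR : ∀ a, πS (algebraMap R S a) = algebraMap K E (πR a))
    (hcompA : ∀ a, πS (algebraMap A S a) = algebraMap F E (πA a))
    {n k d : ℕ} (hk : 1 ≤ k) (hd : 1 ≤ d) (v : Fin k → Fin n → S) (hv : LinearIndependent A v) :
    (d : ℝ) ≤ minDist (rankD R) (Submodule.span A (Set.range v) : Set (Fin n → S)) ↔
      redTup πS n k v ∈ goodTuples F (lowRank K n (d - 1)) k := by
  have hcS' : IsChainData s q₂ S (algebraMap A S gA) := by rw [hg]; exact hcS
  have hS' : IsRed (algebraMap A S gA) πS := by rw [hg]; exact hS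
  have hv' := (li_reduce hs hcA hcS' hA hS' hcompA v).1 hv
  have hnt : Nontrivial A :=
    ⟨⟨1, 0, fun h => hcA.pow_ne_zero (j := 0) (by omega) (by simpa using h)⟩⟩
  have hsm : ∀ (j : ℕ) (x : Fin n → S), gA ^ j • x = fun i => algebraMap R S g ^ j * x i := by
    intro j x; funext i
    rw [Pi.smul_apply, Algebra.smul_def, map_pow, hg]
  rw [le_minDist_iff]
  · constructor
    · intro h c hc
      choose e he using fun i => hA.surj (c i)
      set y := ∑ i, e i • v i with hy
      have hry : redVec πS n y = ∑ i, c i • redTup πS n k v i := by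
        rw [hy, redVec_sum hcompA]
        exact Finset.sum_congr rfl fun i _ => by rw [he]; rfl
      have hyC : y ∈ Submodule.span A (Set.range v) :=
        Submodule.sum_mem _ fun i _ => Submodule.smul_mem _ _ (Submodule.subset_span ⟨i, rfl⟩)
      have hry0 : redVec πS n y ≠ 0 := by
        intro h0
        rw [hry] at h0
        exact hc (funext (Fintype.linearIndependent_iff.1 hv' c h0))
      have h1 := h (gA ^ (s - 1) • y) (Submodule.smul_mem _ _ hyC)
        (fun h0 => hry0 (smul_pow_eq_zero hcS' hS' (by omega) h0))
      rw [hsm] at h1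
      rw [← hry, ← rank_socle hs hcS hR hS hcompR]
      omega
    · intro h x hx hx0
      obtain ⟨c, rfl⟩ := (Submodule.mem_span_range_iff_exists_fun A).1 hx
      have hc : c ≠ 0 := by rintro rfl; simp at hx0
      obtain ⟨i, hi, c', rfl, j, hj⟩ := hcA.factor hc
      set y := ∑ t, c' t • v t with hy
      have hxy : ∑ t, (gA ^ i * c' t) • v t = gA ^ i • y := by
        rw [hy, Finset.smul_sum]
        exact Finset.sum_congr rfl fun t _ => by rw [mul_smul]
      have hcne : (fun t => πA (c' t)) ≠ 0 := fun h0 => hj ((hA.ker _).1 (congrFun h0 j))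
      have h1 := h _ hcne
      have hry : redVec πS n y = ∑ i, πA (c' i) • redTup πS n k v i := by
        rw [hy, redVec_sum hcompA]; rfl
      rw [← hry, ← rank_socle hs hcS hR hS hcompR] at h1
      have h2 := mu_smul_le (R := R) (algebraMap R S g ^ (s - 1 - i)) (gA ^ i • y)
      have h3 : (fun t => algebraMap R S g ^ (s - 1 - i) * (gA ^ i • y) t)
          = fun t => algebraMap R S g ^ (s - 1) * y t := by
        rw [hsm]; funext t
        rw [← mul_assoc, ← pow_add, show s - 1 - i + i = s - 1 by omega]
      rw [h3] at h2
      change d ≤ mu R (Submodule.span R (Set.range (∑ t, (gA ^ i * c' t) • v t)))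
      rw [hxy]
      omega
  · refine ⟨v ⟨0, hk⟩, Submodule.subset_span ⟨_, rfl⟩, hv.ne_zero _⟩

/-- Every free code of rank `k` has the same number of ordered bases, and the ordered bases of
codes of distance at least `d` are the tuples whose reduction avoids the ball. -/
lemma card_codes_mul [Finite S] [Finite A] [Finite F] (hs : 1 ≤ s)
    (hg : algebraMap A S gA = algebraMap R S g)
    (hcA : IsChainData s q₁ A gA) (hcS : IsChainData s q₂ S (algebraMap R S g))
    (hR : IsRed g πR) (hA : IsRed gA πA) (hS : IsRed (algebraMap R S g) πS)
    (hcompR : ∀ a, πS (algebraMap R S a) = algebraMap K E (πR a))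
    (hcompA : ∀ a, πS (algebraMap A S a) = algebraMap F E (πA a))
    {n k d : ℕ} (hk : 1 ≤ k) (hd : 1 ≤ d) :
    Nat.card {C : Submodule A (Fin n → S) // Module.Free A C ∧ mu A C = k ∧
        (d : ℝ) ≤ minDist (rankD R) (C : Set (Fin n → S))}
      * Nat.card {w : Fin k → Fin k → A // LinearIndependent A w}
      = Nat.card {v : Fin k → Fin n → S //
          redTup πS n k v ∈ goodTuples F (lowRank K n (d - 1)) k} := by
  classical
  have hcS' : IsChainData s q₂ S (algebraMap A S gA) := by rw [hg]; exact hcS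
  have hS' : IsRed (algebraMap A S gA) πS := by rw [hg]; exact hS
  have hnt : Nontrivial A :=
    ⟨⟨1, 0, fun h => hcA.pow_ne_zero (j := 0) (by omega) (by simpa using h)⟩⟩
  have hmu : ∀ C : Submodule A (Fin n → S), Module.Free A C → mu A C = Module.finrank A C := by
    intro C hC
    apply le_antisymm
    · refine (mu_le_iff C _).2 ⟨fun i => (Module.finBasis A C i : Fin n → S), ?_⟩
      have := congrArg (Submodule.map C.subtype) (Module.finBasis A C).span_eq
      rw [Submodule.map_span, ← Set.range_comp, Submodule.map_top, Submodule.range_subtype] at this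
      exact this
    · obtain ⟨f, hf⟩ := (mu_le_iff C _).1 le_rfl
      have := finrank_range_le_card (R := A) f
      rw [Fintype.card_fin, Set.finrank, hf] at this
      exact this
  have hli : ∀ v : Fin k → Fin n → S, redTup πS n k v ∈ goodTuples F (lowRank K n (d - 1)) k →
      LinearIndependent A v := by
    intro v hv
    rw [li_reduce hs hcA hcS' hA hS' hcompA v, Fintype.linearIndependent_iff]
    intro c hc
    by_contra hne
    refine hv c (fun h => hne (congrFun h)) ?_
    rw [hc]
    change Module.finrank K _ ≤ _
    have : Submodule.span K (Set.range (0 : Fin n → E)) = ⊥ := by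
      rw [Submodule.span_eq_bot]; rintro _ ⟨i, rfl⟩; rfl
    rw [this, finrank_bot]; exact Nat.zero_le _
  have hsp : ∀ v : Fin k → Fin n → S, LinearIndependent A v →
      Module.Free A (Submodule.span A (Set.range v)) ∧
      mu A (Submodule.span A (Set.range v)) = k := by
    intro v hv
    have hf : Module.Free A (Submodule.span A (Set.range v)) :=
      Module.Free.of_basis (Module.Basis.span hv)
    refine ⟨hf, ?_⟩
    rw [hmu _ hf, Module.finrank_eq_card_basis (Module.Basis.span hv), Fintype.card_fin]
  set Codes := {C : Submodule A (Fin n → S) // Module.Free A C ∧ mu A C = k ∧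
        (d : ℝ) ≤ minDist (rankD R) (C : Set (Fin n → S))} with hCodes
  have hfin : Finite (Submodule A (Fin n → S)) :=
    Finite.of_injective (fun C => (C : Set (Fin n → S))) SetLike.coe_injective
  have := Fintype.ofFinite Codes
  set Φ : {v : Fin k → Fin n → S // redTup πS n k v ∈ goodTuples F (lowRank K n (d - 1)) k} →
      Codes := fun v => ⟨Submodule.span A (Set.range v.1), (hsp v.1 (hli _ v.2)).1,
        (hsp v.1 (hli _ v.2)).2, (le_minDist_span_iff hs hg hcA hcS hR hA hS hcompR hcompA hk hd
          v.1 (hli _ v.2)).2 v.2⟩ with hΦ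
  rw [← Nat.card_congr (Equiv.sigmaFiberEquiv Φ), Nat.card_sigma]
  -- Relative to a fixed basis of `C`, the ordered bases of `C` are the ordered bases of `A ^ k`.
  have hfib : ∀ C : Codes, Nat.card {v // Φ v = C}
      = Nat.card {w : Fin k → Fin k → A // LinearIndependent A w} := by
    rintro ⟨C, hfree, hrk, hdist⟩
    rw [hmu C hfree] at hrk
    set b : Module.Basis (Fin k) A C := Module.finBasisOfFinrankEq A C hrk
    set e : C ≃ₗ[A] (Fin k → A) := b.equivFun
    have hspan : ∀ w : Fin k → C, LinearIndependent A w →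
        Submodule.span A (Set.range fun i => (w i : Fin n → S)) = C := by
      intro w hw
      have hinj : Function.Injective (e ∘ Fintype.linearCombination A w) :=
        e.injective.comp hw.fintypeLinearCombination_injective
      have hsurj := Finite.surjective_of_injective hinj
      have htop : Submodule.span A (Set.range w) = ⊤ := by
        rw [eq_top_iff]
        intro x _
        obtain ⟨c, hc⟩ := hsurj (e x)
        rw [← e.injective hc, Fintype.linearCombination_apply]
        exact Submodule.sum_mem _ fun i _ =>
          Submodule.smul_mem _ _ (Submodule.subset_span ⟨i, rfl⟩)
      have := congrArg (Submodule.map C.subtype) htop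
      rw [Submodule.map_span, ← Set.range_comp, Submodule.map_top, Submodule.range_subtype] at this
      exact this
    have e₁ : {w : Fin k → C // LinearIndependent A w} ≃
        {w : Fin k → Fin k → A // LinearIndependent A w} :=
      (Equiv.arrowCongr (Equiv.refl _) e.toEquiv).subtypeEquiv (fun w => by
        change LinearIndependent A w ↔ LinearIndependent A (e ∘ w)
        exact (e.toLinearMap.linearIndependent_iff e.ker).symm)
    rw [← Nat.card_congr e₁]
    refine Nat.card_congr ⟨fun v => ⟨fun i => ⟨v.1.1 i, ?_⟩, ?_⟩,
      fun w => ⟨⟨fun i => (w.1 i : Fin n → S), ?_⟩, ?_⟩, ?_, ?_⟩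
    · have := congrArg Subtype.val v.2
      change Submodule.span A (Set.range v.1.1) = C at this
      exact this.le (Submodule.subset_span ⟨i, rfl⟩)
    · exact LinearIndependent.of_comp C.subtype (hli _ v.1.2)
    · have hw : LinearIndependent A (fun i => (w.1 i : Fin n → S)) :=
        w.2.map' C.subtype C.ker_subtype
      rw [← le_minDist_span_iff hs hg hcA hcS hR hA hS hcompR hcompA hk hd _ hw, hspan w.1 w.2]
      exact hdist
    · exact Subtype.ext (hspan w.1 w.2)
    · intro v; rfl
    · intro w; rfl
  simp only [hfib, Finset.sum_const, Finset.card_univ, smul_eq_mul, Nat.card_eq_fintype_card]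

end Codes

/-! ### Counting codes for one prime power -/

section Count

/-- The number of free submodules of rank `k`, times the number of ordered bases of each, is the
number of independent `k`-tuples. -/
lemma NN_mul {s Q K k : ℕ} (hs : 1 ≤ s) (hQ : 2 ≤ Q) (hk : k ≤ K) :
    NN s Q (K : ℤ) (k : ℤ) * ((∏ i : Fin k, ((Q : ℝ) ^ k - (Q : ℝ) ^ (i : ℕ))) *
      (((Q : ℝ) ^ (s - 1)) ^ k) ^ k)
      = (∏ i : Fin k, ((Q : ℝ) ^ K - (Q : ℝ) ^ (i : ℕ))) * (((Q : ℝ) ^ (s - 1)) ^ K) ^ k := by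
  have hQ1 : (1 : ℝ) < Q := by exact_mod_cast (by omega : 1 < Q)
  have hQ0 : (0 : ℝ) < Q := by linarith
  rw [Fin.prod_univ_eq_prod_range (fun i => (Q : ℝ) ^ k - (Q : ℝ) ^ i),
    Fin.prod_univ_eq_prod_range (fun i => (Q : ℝ) ^ K - (Q : ℝ) ^ i)]
  have hfac : ∀ M, k ≤ M → ∏ i ∈ Finset.range k, ((Q : ℝ) ^ M - (Q : ℝ) ^ i)
      = (∏ i ∈ Finset.range k, (Q : ℝ) ^ i) * ∏ i ∈ Finset.range k, ((Q : ℝ) ^ (M - i) - 1) := by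
    intro M hM
    rw [← Finset.prod_mul_distrib]
    refine Finset.prod_congr rfl fun i hi => ?_
    have := Finset.mem_range.1 hi
    rw [mul_sub, ← pow_add, mul_one, show i + (M - i) = M by omega]
  rw [hfac K hk, hfac k le_rfl]
  have hden : ∏ i ∈ Finset.range k, ((Q : ℝ) ^ (k - i) - 1)
      = ∏ i ∈ Finset.range k, ((Q : ℝ) ^ (i + 1) - 1) := by
    rw [← Finset.prod_range_reflect]
    refine Finset.prod_congr rfl fun i hi => ?_
    have := Finset.mem_range.1 hi
    rw [show k - (k - 1 - i) = i + 1 by omega]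
  have hnn : NN s Q (K : ℤ) (k : ℤ) = ((Q : ℝ) ^ (k * (K - k) * (s - 1))) *
      ((∏ i ∈ Finset.range k, ((Q : ℝ) ^ (K - i) - 1)) /
        ∏ i ∈ Finset.range k, ((Q : ℝ) ^ (i + 1) - 1)) := by
    rw [NN, if_neg (by omega), ← Finset.prod_div_distrib]
    congr 1
    · rw [← zpow_natCast]
      congr 1
      rw [Nat.cast_mul, Nat.cast_mul, Nat.cast_sub hk, Nat.cast_sub hs]; simp
    · rw [Int.toNat_natCast]
      symm
      refine Finset.prod_nbij' (· + 1) (· - 1) ?_ ?_ ?_ ?_ ?_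
      · intro i hi; have := Finset.mem_range.1 hi; exact Finset.mem_Icc.2 ⟨by omega, by omega⟩
      · intro i hi; have := Finset.mem_Icc.1 hi; exact Finset.mem_range.2 (by omega)
      · intro i _; simp
      · intro i hi; have := Finset.mem_Icc.1 hi; change i - 1 + 1 = i; omega
      · intro i hi
        have := Finset.mem_range.1 hi
        rw [← zpow_natCast, ← zpow_natCast, Nat.cast_sub (by omega)]
        congr 3
        push_cast; ring
  have hpos : ∏ i ∈ Finset.range k, ((Q : ℝ) ^ (i + 1) - 1) ≠ 0 := by
    refine Finset.prod_ne_zero_iff.2 fun i _ => ?_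
    have := one_lt_pow₀ hQ1 (Nat.succ_ne_zero i)
    exact (sub_pos.2 this).ne'
  have hexp : (Q : ℝ) ^ (k * (K - k) * (s - 1)) * (((Q : ℝ) ^ (s - 1)) ^ k) ^ k
      = (((Q : ℝ) ^ (s - 1)) ^ K) ^ k := by
    obtain ⟨e, rfl⟩ := Nat.exists_eq_add_of_le hk
    simp only [← pow_mul, ← pow_add]
    congr 1
    rw [Nat.add_sub_cancel_left]; ring
  rw [hnn, hden, ← hexp]
  field_simp

lemma exists_residue {A : Type} [CommRing A] (g : A) (h : (Ideal.span {g}).IsMaximal) :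
    ∃ (F : Type) (_ : Field F) (π : A →+* F),
      IsRed g π ∧ Nat.card F = Nat.card (A ⧸ Ideal.span {g}) :=
  ⟨A ⧸ Ideal.span {g}, Ideal.Quotient.field _, Ideal.Quotient.mk _,
    ⟨Ideal.Quotient.mk_surjective, fun _ => Ideal.Quotient.eq_zero_iff_mem⟩, rfl⟩

/-- An extension of local rings with a common uniformizer induces a map of residue fields. -/
lemma exists_residue_map {A S F E : Type} [CommRing A] [CommRing S] [Field F] [Field E]
    [Algebra A S] {g : A} {πA : A →+* F} {πS : S →+* E} (hA : IsRed g πA)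
    (hS : IsRed (algebraMap A S g) πS) :
    ∃ φ : F →+* E, ∀ a, πS (algebraMap A S a) = φ (πA a) := by
  have hker : RingHom.ker πA ≤ RingHom.ker (πS.comp (algebraMap A S)) := by
    intro a ha
    obtain ⟨b, rfl⟩ := Ideal.mem_span_singleton'.1 ((hA.ker a).1 ha)
    rw [RingHom.mem_ker, RingHom.comp_apply, map_mul, map_mul,
      (hS.ker _).2 (Ideal.mem_span_singleton_self _), mul_zero]
  refine ⟨πA.liftOfSurjective hA.surj ⟨_, hker⟩, fun a => ?_⟩
  exact (RingHom.liftOfRightInverse_comp_apply πA _ (Function.rightInverse_surjInv hA.surj)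
    ⟨πS.comp (algebraMap A S), hker⟩ a).symm

/-- A Galois extension of a chain ring is a chain ring with the same uniformizer. -/
lemma IsGaloisExtData.chain {s q m c : ℕ} {R S : Type} [CommRing R] [CommRing S] [Algebra R S]
    {g : R} (hm : 1 ≤ m) (hR : IsChainData s q R g) (h : IsGaloisExtData m c R S g) :
    IsChainData s c S (algebraMap R S g) := by
  obtain ⟨hfree, hrk, hmax, hloc, hcard⟩ := h
  refine ⟨hmax, hloc, ?_, ?_, hcard⟩
  · rw [← map_pow, hR.2.2.1, map_zero]
  · rw [← map_pow]
    have : Nontrivial R := ⟨⟨_, _, hR.2.2.2.1⟩⟩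
    have : Nontrivial S := by
      refine not_subsingleton_iff_nontrivial.1 fun hsub => ?_
      rw [Module.finrank_zero_of_subsingleton] at hrk
      omega
    have hinj : Function.Injective (algebraMap R S) := FaithfulSMul.algebraMap_injective R S
    intro h0
    exact hR.2.2.2.1 (hinj (by rw [h0, map_zero]))

lemma card_ker {s q : ℕ} {A F : Type*} [CommRing A] [CommRing F] [Finite A] {g : A}
    {π : A →+* F} (hs : 1 ≤ s) (hq : 0 < q) (h : IsChainData s q A g) (hπ : IsRed g π) :
    Nat.card {a // π a = 0} = q ^ (s - 1) := by
  rw [← (h.card_span hs hq).1]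
  exact Nat.card_congr (Equiv.subtypeEquivRight hπ.ker)

/-- The number of ordered bases of `A ^ k`. -/
lemma card_li_square {s Q : ℕ} {A F : Type} [CommRing A] [Field F] [Finite A] [Finite F] {g : A}
    {π : A →+* F} (hs : 1 ≤ s) (hQ : 0 < Q) (h : IsChainData s Q A g) (hπ : IsRed g π)
    (hF : Nat.card F = Q) (k : ℕ) :
    Nat.card {w : Fin k → Fin k → A // LinearIndependent A w}
      = (∏ i : Fin k, (Q ^ k - Q ^ (i : ℕ))) * ((Q ^ (s - 1)) ^ k) ^ k := by
  have := Fintype.ofFinite F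
  have h1 := card_redTup hπ.surj k k {u : Fin k → Fin k → F | LinearIndependent F u}
  rw [card_ker hs hQ h hπ] at h1
  have h2 := card_linearIndependent (K := F) (V := Fin k → F) (k := k) (by simp)
  rw [Module.finrank_fin_fun, ← Nat.card_eq_fintype_card, hF] at h2
  rw [← h2]
  refine Eq.trans (Nat.card_congr (Equiv.subtypeEquivRight fun w => ?_)) h1
  exact li_reduce (S := A) (E := F) hs h h hπ hπ (fun a => rfl) w

/-- The counts of good tuples and of the ball of radius `r` in `E ^ (r + p)`, for residue fields
of the relevant cardinalities. -/
lemma field_bounds {ℓ t r p q : ℕ} {K F E : Type} [Field K] [Field F] [Field E] [Finite K]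
    [Finite F] [Finite E] [Algebra K E] [Algebra F E] (hq : 2 ≤ q) (hrm : r ≤ ℓ * t)
    (hK : Nat.card K = q) (hF : Nat.card F = q ^ ℓ) (hE : Nat.card E = q ^ (ℓ * t))
    {Q W : ℝ} (hQ : Q = (q : ℝ) ^ ℓ) (hW : W = Q ^ ((r + p) * t)) {G b : ℕ}
    (hG : G = Nat.card (goodTuples F (lowRank K (E := E) (r + p) r) (t * p)))
    (hb : b = Nat.card (lowRank K (E := E) (r + p) r)) :
    (W ^ (t * p) - G) * ((Q - 1) * W) ≤ (Q ^ (t * p) - 1) * b * W ^ (t * p) ∧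
      G * (Q * W + (Q ^ (t * p) - 1) * b) ≤ Q * W * W ^ (t * p) ∧
      G ≤ W ^ (t * p) ∧
      b ≤ (r + p).choose r * ((q ^ (ℓ * t)) ^ r * (q ^ r) ^ p) ∧
      (∏ i : Fin r, (q ^ (ℓ * t) - q ^ (i : ℕ))) * (q ^ r) ^ p ≤ b := by
  have := Fintype.ofFinite F
  have hfr : Module.finrank K E = ℓ * t := by
    have := Module.natCard_eq_pow_finrank (K := K) (V := E)
    rw [hK, hE] at this
    exact (Nat.pow_right_injective hq this).symm
  have hFR : (Nat.card F : ℝ) = Q := by rw [hF, hQ, Nat.cast_pow]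
  have hVR : (Nat.card (Fin (r + p) → E) : ℝ) = W := by
    rw [Nat.card_fun, Nat.card_fin, hE, hW, hQ, Nat.cast_pow, Nat.cast_pow, ← pow_mul, ← pow_mul]
    congr 1; ring
  have hinv : ∀ a : F, a ≠ 0 → ∀ x ∈ lowRank K (E := E) (r + p) r,
      a • x ∈ lowRank K (E := E) (r + p) r := fun a _ x hx => lowRank_smul a x hx
  have hmom := moment_bounds (F := F) (V := Fin (r + p) → E) _ hinv (t * p)
  have hle := card_good_le (F := F) (lowRank K (E := E) (r + p) r) (t * p)
  rw [hFR, hVR, ← hG, ← hb] at hmom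
  rw [← hG] at hle
  have hle' : (G : ℝ) ≤ W ^ (t * p) := by
    rw [← hVR]; exact hle
  refine ⟨hmom.1, hmom.2, hle', ?_, ?_⟩
  · have := card_lowRank_le (K := K) (E := E) (n := r + p) (r := r) (by omega)
    rwa [hE, hK, Nat.add_sub_cancel_left, ← hb] at this
  · have := le_card_lowRank (K := K) (E := E) (p := p) hfr hrm
    rwa [hK, ← hb] at this

/-- Two counts with a common normalisation have the ratio of the normalised counts. -/
lemma div_eq_of_common {a N G D L X Y : ℝ} (hL : L ≠ 0) (hX : X ≠ 0) (hY : Y ≠ 0)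
    (h : a * (L * Y) = G * X) (hN : N * (L * Y) = D * X) : a / N = G / D := by
  have hLY : L * Y ≠ 0 := mul_ne_zero hL hY
  rw [← mul_div_mul_right a N hLY, h, hN, mul_div_mul_right _ _ hX]

/-- The density for one prime power, reduced to counting over the residue fields: `G` is the
number of good tuples and `b` the size of the ball. -/
theorem density_reduction {s ℓ t r p q : ℕ} {R S : Type} [CommRing R] [Finite R] [CommRing S]
    [Finite S] [Algebra R S] (g : R) (Sb : Subalgebra R S) (hs : 1 ≤ s) (hl : 1 ≤ ℓ) (ht : 1 ≤ t)
    (hp : 1 ≤ p) (hq : 2 ≤ q) (hrm : r ≤ ℓ * t)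
    (hR : IsChainData s q R g) (hS : IsGaloisExtData (ℓ * t) (q ^ (ℓ * t)) R S g)
    (hSb : IsGaloisExtData ℓ (q ^ ℓ) R Sb g) :
    ∃ G b : ℕ,
      densityCodes (n := r + p) s q ℓ Sb (rankD R) ((r + p) * (ℓ * t)) (t * p) (r + 1)
        = G / ∏ i : Fin (t * p), (((q : ℝ) ^ ℓ) ^ ((r + p) * t) - ((q : ℝ) ^ ℓ) ^ (i : ℕ)) ∧
      (((((q : ℝ) ^ ℓ) ^ ((r + p) * t)) ^ (t * p) - G) *
          (((q : ℝ) ^ ℓ - 1) * ((q : ℝ) ^ ℓ) ^ ((r + p) * t))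
        ≤ (((q : ℝ) ^ ℓ) ^ (t * p) - 1) * b * (((q : ℝ) ^ ℓ) ^ ((r + p) * t)) ^ (t * p)) ∧
      ((G : ℝ) * ((q : ℝ) ^ ℓ * ((q : ℝ) ^ ℓ) ^ ((r + p) * t)
          + (((q : ℝ) ^ ℓ) ^ (t * p) - 1) * b)
        ≤ (q : ℝ) ^ ℓ * ((q : ℝ) ^ ℓ) ^ ((r + p) * t) *
          (((q : ℝ) ^ ℓ) ^ ((r + p) * t)) ^ (t * p)) ∧
      ((G : ℝ) ≤ (((q : ℝ) ^ ℓ) ^ ((r + p) * t)) ^ (t * p)) ∧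
      b ≤ (r + p).choose r * ((q ^ (ℓ * t)) ^ r * (q ^ r) ^ p) ∧
      (∏ i : Fin r, (q ^ (ℓ * t) - q ^ (i : ℕ))) * (q ^ r) ^ p ≤ b := by
  have hm : 1 ≤ ℓ * t := Nat.mul_pos hl ht
  have hk : 1 ≤ t * p := Nat.mul_pos ht hp
  have hcS := hS.chain hm hR
  have hcB := hSb.chain hl hR
  obtain ⟨K, _, πR, hπR, hK⟩ := exists_residue g hR.1
  obtain ⟨F, _, πA, hπA, hF⟩ := exists_residue _ hcB.1
  obtain ⟨E, _, πS, hπS, hE⟩ := exists_residue _ hcS.1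
  rw [hR.2.2.2.2] at hK
  rw [hcB.2.2.2.2] at hF
  rw [hcS.2.2.2.2] at hE
  have hg : algebraMap Sb S (algebraMap R Sb g) = algebraMap R S g :=
    (IsScalarTower.algebraMap_apply R Sb S g).symm
  have hπS' : IsRed (algebraMap Sb S (algebraMap R Sb g)) πS := by rw [hg]; exact hπS
  obtain ⟨φ, hφ⟩ := exists_residue_map hπR hπS
  obtain ⟨ψ, hψ⟩ := exists_residue_map (A := Sb) (S := S) hπA hπS'
  let _ : Algebra K E := φ.toAlgebra
  let _ : Algebra F E := ψ.toAlgebra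
  have : Finite E := Finite.of_surjective πS hπS.surj
  have : Finite K := Finite.of_surjective πR hπR.surj
  have : Finite F := Finite.of_surjective πA hπA.surj
  have := Fintype.ofFinite F
  obtain ⟨G, hG⟩ : ∃ G, G = Nat.card (goodTuples F (lowRank K (E := E) (r + p) r) (t * p)) :=
    ⟨_, rfl⟩
  obtain ⟨b, hb⟩ : ∃ b, b = Nat.card (lowRank K (E := E) (r + p) r) := ⟨_, rfl⟩
  refine ⟨G, b, ?_, field_bounds hq hrm hK hF hE rfl rfl hG hb⟩
  have hcodes := card_codes_mul (n := r + p) (k := t * p) (d := r + 1) (R := R) (A := Sb) (S := S)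
    (K := K) (F := F) (E := E) hs hg hcB hcS hπR hπA hπS hφ hψ hk (by omega)
  rw [Nat.add_sub_cancel, card_redTup hπS.surj,
    card_li_square hs (by positivity) hcB hπA hF, card_ker hs (by positivity) hcS hπS,
    ← hG] at hcodes
  change numCodes Sb (rankD R) (t * p) (r + 1) * _ = _ at hcodes
  have hQ2 : 2 ≤ q ^ ℓ := hq.trans (Nat.le_self_pow (by omega) q)
  have hkK : t * p ≤ (r + p) * t := by nlinarith
  have hNN := NN_mul (s := s) (Q := q ^ ℓ) hs hQ2 hkK
  have hcast : ((∏ i : Fin (t * p), ((q ^ ℓ) ^ (t * p) - (q ^ ℓ) ^ (i : ℕ)) : ℕ) : ℝ)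
      = ∏ i : Fin (t * p), (((q : ℝ) ^ ℓ) ^ (t * p) - ((q : ℝ) ^ ℓ) ^ (i : ℕ)) := by
    rw [Nat.cast_prod]
    refine Finset.prod_congr rfl fun i _ => ?_
    rw [Nat.cast_sub (Nat.pow_le_pow_right (by omega) i.2.le)]
    push_cast; rfl
  have hcodes' := congrArg (Nat.cast (R := ℝ)) hcodes
  rw [Nat.cast_mul, Nat.cast_mul, Nat.cast_mul, hcast] at hcodes'
  push_cast at hcodes' hNN
  have hqR : (1 : ℝ) < (q : ℝ) ^ ℓ := by exact_mod_cast (by omega : 1 < q ^ ℓ)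
  have hL : 0 < ∏ i : Fin (t * p), (((q : ℝ) ^ ℓ) ^ (t * p) - ((q : ℝ) ^ ℓ) ^ (i : ℕ)) :=
    Finset.prod_pos fun i _ => sub_pos.2 (pow_lt_pow_right₀ hqR i.2)
  have hdiv : (r + p) * (ℓ * t) / ℓ = (r + p) * t := by
    rw [show (r + p) * (ℓ * t) = ℓ * ((r + p) * t) by ring]
    exact Nat.mul_div_cancel_left _ (by omega)
  rw [densityCodes, hdiv]
  have hker : ((((q : ℝ) ^ (ℓ * t)) ^ (s - 1)) ^ (r + p)) ^ (t * p)
      = ((((q : ℝ) ^ ℓ) ^ (s - 1)) ^ ((r + p) * t)) ^ (t * p) := by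
    simp only [← pow_mul]; congr 1; ring
  rw [hker] at hcodes'
  have hq0 : (0 : ℝ) < q := by exact_mod_cast (by omega : 0 < q)
  refine div_eq_of_common hL.ne' ?_ ?_ hcodes' (by push_cast; exact hNN) <;> positivity

end Count

/-! ### Asymptotics -/

section Asymptotics

/-- Three regimes for a sequence squeezed by the first and second moment bounds, where
`q ^ θ / q ^ ℓ` is the order of the expected number of lines of short vectors. -/
lemma trichotomy {f : Filter ℕ} [f.NeBot] (hf : f ≤ atTop) {δ D L : ℕ → ℝ} {C : ℝ} {ℓ θ : ℕ}
    (hC : 0 ≤ C) (hD : Tendsto D f (𝓝 1)) (hL : Tendsto L f (𝓝 1)) (hδ : ∀ᶠ q in f, 0 ≤ δ q)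
    (h1 : ∀ᶠ q in f, δ q * D q ≤ 1)
    (h2 : ∀ᶠ q in f, 1 - δ q * D q ≤ C * (q : ℝ) ^ θ / ((q : ℝ) ^ ℓ - 1))
    (h3 : ∀ᶠ q in f, δ q * D q * (1 + L q * (q : ℝ) ^ θ / (q : ℝ) ^ ℓ) ≤ 1) :
    (θ < ℓ → Tendsto δ f (𝓝 1)) ∧ (ℓ < θ → Tendsto δ f (𝓝 0)) ∧
      (ℓ = θ → limsup δ f ≤ 1 / 2) := by
  have hDpos : ∀ᶠ q in f, 0 < D q := hD.eventually_const_lt one_pos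
  have hLpos : ∀ᶠ q in f, 0 < L q := hL.eventually_const_lt one_pos
  have hq2 : ∀ᶠ q : ℕ in f, 2 ≤ q := hf (eventually_ge_atTop 2)
  have hinv : Tendsto (fun q : ℕ => ((q : ℝ))⁻¹) f (𝓝 0) :=
    tendsto_inv_atTop_nhds_zero_nat.mono_left hf
  have hDinv : Tendsto (fun q => 1 / D q) f (𝓝 1) := by
    simpa using hD.inv₀ one_ne_zero
  refine ⟨fun h => ?_, fun h => ?_, fun h => ?_⟩
  · have hlow : Tendsto (fun q : ℕ => (1 - 2 * C * (q : ℝ)⁻¹) * (1 / D q)) f (𝓝 1) := by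
      simpa using ((hinv.const_mul (2 * C)).const_sub 1).mul hDinv
    refine tendsto_of_tendsto_of_tendsto_of_le_of_le' hlow hDinv ?_ ?_
    · filter_upwards [hDpos, hq2, h2] with q hd hq h2
      have hqR : (2 : ℝ) ≤ q := by exact_mod_cast hq
      have hQ : (2 : ℝ) ≤ (q : ℝ) ^ ℓ := hqR.trans (le_self_pow₀ (by linarith) (by omega))
      have hle : (q : ℝ) ^ θ * q ≤ (q : ℝ) ^ ℓ := by
        rw [← pow_succ]; exact pow_le_pow_right₀ (by linarith) h
      have hb : C * (q : ℝ) ^ θ / ((q : ℝ) ^ ℓ - 1) ≤ 2 * C * (q : ℝ)⁻¹ := by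
        rw [← div_eq_mul_inv, div_le_div_iff₀ (by linarith) (by linarith)]
        nlinarith
      rw [mul_one_div, div_le_iff₀ hd]
      linarith
    · filter_upwards [hDpos, h1] with q hd h1
      rwa [le_div_iff₀ hd]
  · have hup : Tendsto (fun q : ℕ => 1 / D q * (L q)⁻¹ * (q : ℝ)⁻¹) f (𝓝 0) := by
      simpa using (hDinv.mul (hL.inv₀ one_ne_zero)).mul hinv
    refine tendsto_of_tendsto_of_tendsto_of_le_of_le' tendsto_const_nhds hup hδ ?_
    filter_upwards [hDpos, hLpos, hq2, h3, hδ] with q hd hl hq h3 h0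
    have hqR : (2 : ℝ) ≤ q := by exact_mod_cast hq
    have hle : (q : ℝ) ≤ (q : ℝ) ^ θ / (q : ℝ) ^ ℓ := by
      rw [le_div_iff₀ (by positivity), ← pow_succ']
      exact pow_le_pow_right₀ (by linarith) h
    have hmain : δ q * (D q * L q * q) ≤ 1 := by
      refine le_trans ?_ h3
      rw [mul_assoc (D q), ← mul_assoc, mul_div_assoc]
      have : L q * q ≤ 1 + L q * ((q : ℝ) ^ θ / (q : ℝ) ^ ℓ) := by nlinarith
      exact mul_le_mul_of_nonneg_left this (by positivity)
    rw [one_div, ← mul_inv, ← mul_inv, ← one_div, le_div_iff₀ (by positivity)]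
    exact hmain
  · subst h
    have hup : Tendsto (fun q : ℕ => 1 / D q * (1 + L q)⁻¹) f (𝓝 (1 / 2)) := by
      have := hDinv.mul ((hL.const_add 1).inv₀ (by norm_num))
      convert this using 2
      norm_num
    rw [← hup.limsup_eq]
    refine limsup_le_limsup ?_ ?_ hup.isBoundedUnder_le
    · filter_upwards [hDpos, hLpos, hq2, h3] with q hd hl hq h3
      have hqR : (2 : ℝ) ≤ q := by exact_mod_cast hq
      rw [mul_div_assoc, div_self (by positivity), mul_one] at h3
      rw [one_div, ← mul_inv, ← one_div, le_div_iff₀ (by positivity)]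
      linarith
    · exact (isBoundedUnder_of_eventually_ge hδ).isCoboundedUnder_le

/-- The normalised product `∏ (1 - xⁱ / x^K)` tends to `1` when every `i` is below `K`. -/
lemma tendsto_prod {k K a : ℕ} (hk : k ≤ K) (ha : 1 ≤ a) :
    Tendsto (fun q : ℕ => ∏ i : Fin k, (1 - ((q : ℝ) ^ a) ^ (i : ℕ) / ((q : ℝ) ^ a) ^ K))
      atTop (𝓝 1) := by
  have hx : Tendsto (fun q : ℕ => (q : ℝ) ^ a) atTop atTop :=
    (tendsto_pow_atTop (by omega)).comp tendsto_natCast_atTop_atTop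
  have : Tendsto (fun q : ℕ => ∏ i : Fin k, (1 - ((q : ℝ) ^ a) ^ (i : ℕ) / ((q : ℝ) ^ a) ^ K))
      atTop (𝓝 (∏ _i : Fin k, (1 - 0))) :=
    tendsto_finsetProd _ fun i _ =>
      ((tendsto_pow_div_pow_atTop_zero (i.2.trans_le hk)).comp hx).const_sub 1
  simpa using this

/-- Moment bounds after normalisation. Here `U` is the number of combinations, `W` the size of the
ambient space, `b` the size of the ball, comparable to `Mr * T`, and `T` the order of the expected
number of short vectors. -/
lemma normalise {k : ℕ} {G b Q W U Mr T Cc P Z : ℝ} (hQ : 1 < Q) (hW : W = U * Mr)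
    (hU : 1 ≤ U) (hMr : 0 < Mr) (hT : 0 ≤ T) (hG : 0 ≤ G) (hZ : 0 < Z) (hP : 0 ≤ P)
    (h1 : (W ^ k - G) * ((Q - 1) * W) ≤ (U - 1) * b * W ^ k)
    (h2 : G * (Q * W + (U - 1) * b) ≤ Q * W * W ^ k) (h3 : G ≤ W ^ k)
    (h4 : b ≤ Cc * (Mr * T)) (h5 : P * Mr * T ≤ b) :
    0 ≤ G / (W ^ k * Z) ∧ G / (W ^ k * Z) * Z ≤ 1 ∧
      1 - G / (W ^ k * Z) * Z ≤ Cc * T / (Q - 1) ∧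
      G / (W ^ k * Z) * Z * (1 + (1 - 1 / U) * P * T / Q) ≤ 1 := by
  have hU0 : 0 < U := by linarith
  have hW0 : 0 < W := by rw [hW]; positivity
  have hQ1 : 0 < Q - 1 := by linarith
  have hQ0 : 0 < Q := by linarith
  have hWk : 0 < W ^ k := by positivity
  have hb0 : 0 ≤ b := le_trans (by positivity) h5
  have e : G / (W ^ k * Z) * Z = G / W ^ k := by field_simp
  rw [e]
  refine ⟨by positivity, (div_le_one hWk).2 h3, ?_, ?_⟩
  · rw [le_div_iff₀ hQ1, one_sub_div hWk.ne', div_mul_eq_mul_div, div_le_iff₀ hWk]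
    refine le_of_mul_le_mul_right ?_ hW0
    calc _ = (W ^ k - G) * ((Q - 1) * W) := by ring
      _ ≤ (U - 1) * b * W ^ k := h1
      _ ≤ U * b * W ^ k := by gcongr; linarith
      _ ≤ U * (Cc * (Mr * T)) * W ^ k := by gcongr
      _ = Cc * T * W ^ k * W := by nth_rewrite 3 [hW]; ring
  · have key : Q * W * (1 + (1 - 1 / U) * P * T / Q) ≤ Q * W + (U - 1) * b := by
      have : Q * W * (1 + (1 - 1 / U) * P * T / Q) = Q * W + (U - 1) * (P * Mr * T) := by
        rw [hW]; field_simp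
      rw [this]
      have := mul_le_mul_of_nonneg_left h5 (sub_nonneg.2 hU)
      linarith
    rw [div_mul_eq_mul_div, div_le_one hWk]
    refine le_of_mul_le_mul_left ?_ (mul_pos hQ0 hW0)
    calc _ = G * (Q * W * (1 + (1 - 1 / U) * P * T / Q)) := by ring
      _ ≤ G * (Q * W + (U - 1) * b) := by gcongr
      _ ≤ _ := h2

lemma prod_sub_eq {x w : ℝ} (hw : w ≠ 0) (k : ℕ) :
    ∏ i : Fin k, (w - x ^ (i : ℕ)) = w ^ k * ∏ i : Fin k, (1 - x ^ (i : ℕ) / w) := by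
  rw [← Fin.prod_const, ← Finset.prod_mul_distrib]
  refine Finset.prod_congr rfl fun i _ => ?_
  field_simp

/-- The moment bounds for the density of one prime power. The factors `D` and `L` both tend to `1`
as `q` grows, and `q ^ (r * p) / q ^ ℓ` is the order of the expected number of short lines. -/
theorem density_bounds {s ℓ t r p q : ℕ} {R S : Type} [CommRing R] [Finite R] [CommRing S]
    [Finite S] [Algebra R S] (g : R) (Sb : Subalgebra R S) (hs : 1 ≤ s) (hl : 1 ≤ ℓ) (ht : 1 ≤ t)
    (hp : 1 ≤ p) (hq : 2 ≤ q) (hrm : r ≤ ℓ * t)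
    (hR : IsChainData s q R g) (hS : IsGaloisExtData (ℓ * t) (q ^ (ℓ * t)) R S g)
    (hSb : IsGaloisExtData ℓ (q ^ ℓ) R Sb g) {δ D L : ℝ}
    (hδ : δ = densityCodes (n := r + p) s q ℓ Sb (rankD R) ((r + p) * (ℓ * t)) (t * p) (r + 1))
    (hD : D = ∏ i : Fin (t * p), (1 - ((q : ℝ) ^ ℓ) ^ (i : ℕ) / ((q : ℝ) ^ ℓ) ^ ((r + p) * t)))
    (hL : L = (1 - 1 / ((q : ℝ) ^ ℓ) ^ (t * p)) *
      ∏ i : Fin r, (1 - ((q : ℝ) ^ 1) ^ (i : ℕ) / ((q : ℝ) ^ 1) ^ (ℓ * t))) :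
    0 ≤ δ ∧ δ * D ≤ 1 ∧
      1 - δ * D ≤ (r + p).choose r * (q : ℝ) ^ (r * p) / ((q : ℝ) ^ ℓ - 1) ∧
      δ * D * (1 + L * (q : ℝ) ^ (r * p) / (q : ℝ) ^ ℓ) ≤ 1 := by
  obtain ⟨G, b, hG, h1, h2, h3, h4, h5⟩ := density_reduction g Sb hs hl ht hp hq hrm hR hS hSb
  have hqR : (2 : ℝ) ≤ q := by exact_mod_cast hq
  have hq0 : (0 : ℝ) < q := by linarith
  have hQ : (1 : ℝ) < (q : ℝ) ^ ℓ := one_lt_pow₀ (by linarith) (by omega)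
  have hk : t * p ≤ (r + p) * t := by nlinarith
  have hW : ((q : ℝ) ^ ℓ) ^ ((r + p) * t) ≠ 0 := by positivity
  rw [hδ, hG, prod_sub_eq hW, ← hD]
  subst hL
  refine normalise (b := b)
    (P := ∏ i : Fin r, (1 - ((q : ℝ) ^ 1) ^ (i : ℕ) / ((q : ℝ) ^ 1) ^ (ℓ * t)))
    (U := ((q : ℝ) ^ ℓ) ^ (t * p)) (Mr := ((q : ℝ) ^ (ℓ * t)) ^ r) hQ ?_ (one_le_pow₀ hQ.le)
    (by positivity) (by positivity) (by positivity) ?_ ?_ h1 h2 h3 ?_ ?_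
  · simp only [← pow_mul, ← pow_add]; congr 1; ring
  · rw [hD]
    refine Finset.prod_pos fun i _ => sub_pos.2 ((div_lt_one (by positivity)).2 ?_)
    exact pow_lt_pow_right₀ hQ (i.2.trans_le hk)
  · refine Finset.prod_nonneg fun i _ => sub_nonneg.2 ((div_le_one (by positivity)).2 ?_)
    exact pow_le_pow_right₀ (by linarith) (i.2.le.trans hrm)
  · rw [pow_mul (q : ℝ) r p]; exact_mod_cast h4
  · have h5' := (Nat.cast_le (α := ℝ)).2 h5
    rw [Nat.cast_mul, Nat.cast_prod, Finset.prod_congr rfl (g := fun i : Fin r =>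
      (((q : ℝ) ^ 1) ^ (ℓ * t) - ((q : ℝ) ^ 1) ^ (i : ℕ))), prod_sub_eq (w := ((q : ℝ) ^ 1) ^ (ℓ * t)) (by positivity)] at h5'
    · refine le_trans (le_of_eq ?_) h5'
      push_cast
      rw [pow_one]
      ring
    · intro i _
      rw [Nat.cast_sub (Nat.pow_le_pow_right (by omega) (i.2.le.trans hrm))]
      push_cast
      rw [pow_one]

/-- There are infinitely many prime powers, so limits along them are not vacuous. -/
lemma primePow_neBot : (atTop ⊓ 𝓟 {q : ℕ | IsPrimePow q}).NeBot := by
  rw [← Filter.frequently_mem_iff_neBot]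
  exact (Nat.frequently_atTop_iff_infinite.2 Nat.infinite_setOfPred_prime).mono
    fun _ h => Nat.Prime.isPrimePow h

end Asymptotics

theorem stmt17 (s m ℓ n d : ℕ) (hs : 1 ≤ s) (hm : 1 ≤ m) (hl : 1 ≤ ℓ) (hlm : ℓ ∣ m)
    (hmn : n ≤ m) (hd : 2 ≤ d) (hdn : d ≤ n)
    (R S : ℕ → Type) [∀ q, CommRing (R q)] [∀ q, Fintype (R q)]
    [∀ q, CommRing (S q)] [∀ q, Fintype (S q)] [∀ q, Algebra (R q) (S q)]
    (γ : ∀ q, R q) (Sbar : ∀ q, Subalgebra (R q) (S q))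
    (hfam : ∀ q, IsPrimePow q →
      IsChainData s q (R q) (γ q) ∧ IsGaloisExtData m (q ^ m) (R q) (S q) (γ q) ∧
        IsGaloisExtData ℓ (q ^ ℓ) (R q) (↥(Sbar q)) (γ q))
    :
    ((d - 1) * (n - d + 1) < ℓ →
      Tendsto (fun q : ℕ => densityCodes (n := n) s q ℓ (Sbar q) (rankD (R q)) (n * m) (m * (n - d + 1) / ℓ) d) (atTop ⊓ 𝓟 {q : ℕ | IsPrimePow q}) (𝓝 1)) ∧
    (ℓ < (d - 1) * (n - d + 1) →
      Tendsto (fun q : ℕ => densityCodes (n := n) s q ℓ (Sbar q) (rankD (R q)) (n * m) (m * (n - d + 1) / ℓ) d) (atTop ⊓ 𝓟 {q : ℕ | IsPrimePow q}) (𝓝 0)) ∧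
    (ℓ = (d - 1) * (n - d + 1) →
      limsup (fun q : ℕ => densityCodes (n := n) s q ℓ (Sbar q) (rankD (R q)) (n * m) (m * (n - d + 1) / ℓ) d) (atTop ⊓ 𝓟 {q : ℕ | IsPrimePow q}) ≤ 1 / 2) := by
  obtain ⟨t, rfl⟩ := hlm
  obtain ⟨r, rfl⟩ : ∃ r, d = r + 1 := ⟨d - 1, by omega⟩
  obtain ⟨p, rfl⟩ : ∃ p, n = r + p := ⟨n - r, by omega⟩
  have hp : 1 ≤ p := by omega
  have ht : 1 ≤ t := Nat.pos_of_ne_zero fun h => by simp [h] at hm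
  have e1 : r + p - (r + 1) + 1 = p := by omega
  have e2 : ℓ * t * p / ℓ = t * p := by
    rw [mul_assoc]; exact Nat.mul_div_cancel_left _ (by omega)
  have e3 : r + 1 - 1 = r := by omega
  rw [e1, e2, e3]
  have hne := primePow_neBot
  have hk : t * p ≤ (r + p) * t := by nlinarith
  have hb : ∀ q, IsPrimePow q → _ := fun q h =>
    density_bounds (γ q) (Sbar q) hs hl ht hp h.two_le (by omega : r ≤ ℓ * t) (hfam q h).1
      (hfam q h).2.1 (hfam q h).2.2 rfl rfl rfl
  have hU : Tendsto (fun q : ℕ => 1 - 1 / ((q : ℝ) ^ ℓ) ^ (t * p)) atTop (𝓝 1) := by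
    have h : Tendsto (fun q : ℕ => ((q : ℝ) ^ ℓ) ^ (t * p)) atTop atTop := by
      simp only [← pow_mul]
      exact (tendsto_pow_atTop (by positivity)).comp tendsto_natCast_atTop_atTop
    simpa using h.inv_tendsto_atTop.const_sub 1
  have hL := hU.mul (tendsto_prod (by omega : r ≤ ℓ * t) le_rfl)
  rw [one_mul] at hL
  have hev : ∀ᶠ q in atTop ⊓ 𝓟 {q : ℕ | IsPrimePow q}, IsPrimePow q :=
    mem_inf_of_right (mem_principal_self _)
  exact trichotomy inf_le_left (Nat.cast_nonneg ((r + p).choose r))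
    ((tendsto_prod hk hl).mono_left inf_le_left) (hL.mono_left inf_le_left)
    (hev.mono fun q h => (hb q h).1) (hev.mono fun q h => (hb q h).2.1)
    (hev.mono fun q h => (hb q h).2.2.1) (hev.mono fun q h => (hb q h).2.2.2)
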